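/- arXiv:2208.12174 — 2 statements merged into one kernel-verified Lean document; each statement's English description precedes it below -/
import Mathlib

section
/- There exists a measurable map T : [0,1] → [0,1], bijective up to Lebesgue-null sets with measurable inverse and preserving one-dimensional Lebesgue measure, which is weakly mixing but not strongly mixing: for all Borel sets A, B ⊆ [0,1], (1/n) ∑_{j=0}^{n−1} [|T^{−j}(A) ∩ B| − |A||B|]² → 0 as n → ∞, yet there exist Borel sets A, B ⊆ [0,1] for which |T^{−n}(A) ∩ B| does not converge to |A||B|. -/
open MeasureTheory Filter Set
open scoped ENNReal

/-!
Let `α` be an irrational number with approximations `p / q`, `q` odd, such that `q * |q α - p|`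
tends to `0`. Build over the rotation of `[0, 1)` by `α` the tower of height two whose second floor
lies above `[0, 1/2)`; it induces an ergodic map `T` of `[0, 3/2)`. An orbit segment of length `q`
of the rotation nearly runs through a coset of `(1/q) ℤ / ℤ`, which meets `[0, 1/2)` in `⌊q/2⌋` or
`⌊q/2⌋ + 1` points, because `q` is odd. So the `q`-th return of a point to the base nearly brings
the point back and takes `q + ⌊q/2⌋` or `q + ⌊q/2⌋ + 1` steps. The two cases alternate on intervals
of length `1 / (2q)`, hence are equidistributed, and the powers `T ^ (q + ⌊q/2⌋ + 1)` converge
weakly to the average of `T` and the identity.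

Applied to a set `C` invariant under `T × T`, this weak limit makes the measure of `C` the average
of four numbers that do not exceed it, one of them being the measure of `(id × T)⁻¹ C ∩ C`. Hence
`C` is invariant under `id × T` and, `T` being ergodic, trivial. Thus `T × T` is ergodic, and `T` is
weakly mixing by the mean ergodic theorem. Strong mixing fails because it would give
`|A| ^ 2 ≥ |A| / 2` for every `A`.
-/

open scoped NNReal RealInnerProductSpace symmDiff Topology

section MixingProperties

variable {X : Type*} [MeasurableSpace X]

/-- Weak mixing of `T` with respect to `μ`: the correlations of `T^[j] ⁻¹' A` and `B` tend to
`μ A * μ B` in quadratic mean. That `T` preserves `μ` is not part of the definition. -/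
def WeaklyMixing (T : X → X) (μ : Measure X) : Prop :=
  ∀ A B : Set X, MeasurableSet A → MeasurableSet B →
    Tendsto (fun n : ℕ => (1 / n : ℝ) * ∑ j ∈ Finset.range n,
      (μ.real (T^[j] ⁻¹' A ∩ B) - μ.real A * μ.real B) ^ 2) atTop (𝓝 0)

/-- Strong mixing of `T` with respect to `μ`. That `T` preserves `μ` is not part of the
definition. -/
def StronglyMixing (T : X → X) (μ : Measure X) : Prop :=
  ∀ A B : Set X, MeasurableSet A → MeasurableSet B →
    Tendsto (fun n : ℕ => μ (T^[n] ⁻¹' A ∩ B)) atTop (𝓝 (μ A * μ B))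

/-- The powers `T^[h n]` converge weakly to the average of the identity and `T`, expressed through
indicator functions. This keeps half of the mass of `A` in place, which is incompatible with strong
mixing, and yet it forces ergodic maps to be weakly mixing. -/
def HalfRigidAlong (h : ℕ → ℕ) (T : X → X) (μ : Measure X) : Prop :=
  ∀ A B : Set X, MeasurableSet A → MeasurableSet B →
    Tendsto (fun n => μ.real (T^[h n] ⁻¹' A ∩ B)) atTop
      (𝓝 ((μ.real (A ∩ B) + μ.real (T ⁻¹' A ∩ B)) / 2))

end MixingProperties

section MeanErgodic

variable {X : Type*} [MeasurableSpace X] {μ : Measure X}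

lemma inner_birkhoffAverage_indicatorConstLp [IsFiniteMeasure μ] {T : X → X}
    (hT : MeasurePreserving T μ μ) {A B : Set X} (hA : MeasurableSet A) (hB : MeasurableSet B)
    (n : ℕ) :
    ⟪birkhoffAverage ℝ (Lp.compMeasurePreservingₗᵢ ℝ T hT) _root_.id n
        (indicatorConstLp 2 hA (measure_ne_top μ A) (1 : ℝ)),
      indicatorConstLp 2 hB (measure_ne_top μ B) (1 : ℝ)⟫ =
    (1 / n : ℝ) * ∑ j ∈ Finset.range n, μ.real (T^[j] ⁻¹' A ∩ B) := by
  have hiter (j : ℕ) : (Lp.compMeasurePreservingₗᵢ ℝ T hT)^[j]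
      (indicatorConstLp 2 hA (measure_ne_top μ A) (1 : ℝ)) =
      indicatorConstLp 2 ((hT.iterate j).measurable hA) (measure_ne_top μ _) 1 := by
    change (Lp.compMeasurePreserving T hT)^[j] _ = _
    rw [Lp.compMeasurePreserving_iterate]
    exact Lp.indicatorConstLp_compMeasurePreserving ..
  simp only [birkhoffAverage, birkhoffSum, inner_smul_left, sum_inner, _root_.id, hiter,
    L2.real_inner_indicatorConstLp_one_indicatorConstLp_one]
  simp

theorem tendsto_average_measureReal_of_ergodic [IsProbabilityMeasure μ] {T : X → X}
    (hT : Ergodic T μ) {A B : Set X} (hA : MeasurableSet A) (hB : MeasurableSet B) :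
    Tendsto (fun n : ℕ => (1 / n : ℝ) * ∑ j ∈ Finset.range n, μ.real (T^[j] ⁻¹' A ∩ B)) atTop
      (𝓝 (μ.real A * μ.real B)) := by
  have hTm := hT.toMeasurePreserving
  let U := (Lp.compMeasurePreservingₗᵢ (E := ℝ) (p := 2) ℝ T hTm).toContinuousLinearMap
  let f : Lp ℝ 2 μ := indicatorConstLp 2 hA (measure_ne_top μ A) 1
  let F := (U.eqLocus (1 : Lp ℝ 2 μ →L[ℝ] Lp ℝ 2 μ)).orthogonalProjectionOnto f
  obtain ⟨c, hc⟩ : ∃ c : ℝ, (F : Lp ℝ 2 μ) =ᵐ[μ] Function.const X c := by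
    obtain ⟨c, hc⟩ := hT.eq_const_of_compMeasurePreserving_eq
      (g := ((F : Lp ℝ 2 μ) : X →ₘ[μ] ℝ)) (congrArg Subtype.val F.2)
    exact ⟨c, hc ▸ AEEqFun.coeFn_const X c⟩
  have hlim {C : Set X} (hC : MeasurableSet C) :
      Tendsto (fun n : ℕ => (1 / n : ℝ) * ∑ j ∈ Finset.range n, μ.real (T^[j] ⁻¹' A ∩ C)) atTop
        (𝓝 (c * μ.real C)) := by
    have hmean := (U.tendsto_birkhoffAverage_orthogonalProjection
      (LinearIsometry.norm_toContinuousLinearMap_le _) f).inner (𝕜 := ℝ)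
      (tendsto_const_nhds (x := indicatorConstLp 2 hC (measure_ne_top μ C) (1 : ℝ)))
    have hF : ⟪(F : Lp ℝ 2 μ), indicatorConstLp 2 hC (measure_ne_top μ C) 1⟫ = c * μ.real C := by
      rw [real_inner_comm, L2.inner_indicatorConstLp_one,
        setIntegral_congr_ae hC (hc.mono fun _ hx _ => hx)]
      simp [mul_comm]
    rw [hF] at hmean
    exact hmean.congr fun n => inner_birkhoffAverage_indicatorConstLp hTm hA hC n
  -- For `C = univ` the averages are constant.
  have hcA : c = μ.real A := by
    refine tendsto_nhds_unique (by simpa using hlim .univ) (tendsto_const_nhds.congr' ?_)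
    filter_upwards [eventually_ne_atTop 0] with n hn
    have hmass (j : ℕ) : μ.real (T^[j] ⁻¹' A) = μ.real A :=
      (hTm.iterate j).measureReal_preimage hA.nullMeasurableSet
    simp [hmass, hn]
  exact hcA ▸ hlim hB

end MeanErgodic

lemma tendsto_average_sq_sub {a : ℕ → ℝ} {c : ℝ}
    (h₁ : Tendsto (fun n : ℕ => (1 / n : ℝ) * ∑ j ∈ Finset.range n, a j) atTop (𝓝 c))
    (h₂ : Tendsto (fun n : ℕ => (1 / n : ℝ) * ∑ j ∈ Finset.range n, a j ^ 2) atTop (𝓝 (c ^ 2))) :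
    Tendsto (fun n : ℕ => (1 / n : ℝ) * ∑ j ∈ Finset.range n, (a j - c) ^ 2) atTop (𝓝 0) := by
  have h := (h₂.sub (h₁.const_mul (2 * c))).add_const (c ^ 2)
  rw [show c ^ 2 - 2 * c * c + c ^ 2 = 0 by ring] at h
  refine h.congr' ?_
  filter_upwards [eventually_ne_atTop 0] with n hn
  simp only [sub_sq, Finset.sum_add_distrib, Finset.sum_sub_distrib, ← Finset.mul_sum,
    ← Finset.sum_mul, Finset.sum_const, Finset.card_range, nsmul_eq_mul]
  field_simp

lemma prodMap_preimage_prod_inter_prod {X Y : Type*} (S : X → X) (T : Y → Y)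
    (A A' : Set X) (B B' : Set Y) :
    Prod.map S T ⁻¹' A ×ˢ B ∩ A' ×ˢ B' = (S ⁻¹' A ∩ A') ×ˢ (T ⁻¹' B ∩ B') := by
  rw [← prod_inter_prod]
  rfl

section Product

variable {X : Type*} [MeasurableSpace X] {μ : Measure X}

theorem weaklyMixing_of_ergodic_prodMap [IsProbabilityMeasure μ] {T : X → X}
    (hT : Ergodic (Prod.map T T) (μ.prod μ)) : WeaklyMixing T μ := by
  intro A B hA hB
  apply tendsto_average_sq_sub
  · have h := tendsto_average_measureReal_of_ergodic hT (hA.prod .univ) (hB.prod .univ)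
    simpa only [Prod.map_iterate, prodMap_preimage_prod_inter_prod, measureReal_prod_prod,
      preimage_univ, univ_inter, probReal_univ, mul_one] using h
  · have h := tendsto_average_measureReal_of_ergodic hT (hA.prod hA) (hB.prod hB)
    simpa only [Prod.map_iterate, prodMap_preimage_prod_inter_prod, measureReal_prod_prod,
      ← pow_two, ← mul_pow] using h

theorem tendsto_measureReal_of_isPiSystem {ι : Type*} {l : Filter ι} [IsFiniteMeasure μ]
    {κ : ι → Measure X} (hκ : ∀ i, κ i ≤ μ) {κ' : Measure X} [IsFiniteMeasure κ']
    {𝒮 : Set (Set X)} (hgen : ‹MeasurableSpace X› = MeasurableSpace.generateFrom 𝒮)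
    (hpi : IsPiSystem 𝒮) (huniv : univ ∈ 𝒮)
    (h : ∀ s ∈ 𝒮, Tendsto (fun i => (κ i).real s) l (𝓝 (κ'.real s)))
    {s : Set X} (hs : MeasurableSet s) :
    Tendsto (fun i => (κ i).real s) l (𝓝 (κ'.real s)) := by
  have hfin (i : ι) : IsFiniteMeasure (κ i) := isFiniteMeasure_of_le μ (hκ i)
  induction s, hs using MeasurableSpace.induction_on_inter hgen hpi with
  | empty => simpa using tendsto_const_nhds
  | basic t ht => exact h t ht
  | compl t ht ih => simpa only [measureReal_compl ht] using (h univ huniv).sub ih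
  | iUnion f hdisj hf ih =>
    have hsum (ρ : Measure X) [IsFiniteMeasure ρ] : ρ.real (⋃ k, f k) = ∑' k, ρ.real (f k) := by
      rw [measureReal_def, measure_iUnion hdisj hf,
        ENNReal.tsum_toReal_eq (measure_ne_top ρ <| f ·)]
      rfl
    have hbound : Summable fun k => μ.real (f k) := summable_measure_toReal hf hdisj
    simp only [hsum]
    refine tendsto_tsum_of_dominated_convergence hbound ih (.of_forall fun i k => ?_)
    rw [Real.norm_of_nonneg measureReal_nonneg]
    exact ENNReal.toReal_mono (measure_ne_top μ _) (hκ i _)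

theorem tendsto_measureReal_preimage_inter_of_isPiSystem {ι I : Type*} [Fintype I]
    {l : Filter ι} [IsFiniteMeasure μ] {R : ι → X → X} (hR : ∀ i, MeasurePreserving (R i) μ μ)
    {Q : I → X → X} (hQ : ∀ k, Measurable (Q k)) (w : I → ℝ≥0)
    {𝒮 : Set (Set X)} (hgen : ‹MeasurableSpace X› = MeasurableSpace.generateFrom 𝒮)
    (hpi : IsPiSystem 𝒮) (huniv : univ ∈ 𝒮)
    (h : ∀ A ∈ 𝒮, ∀ B ∈ 𝒮, Tendsto (fun i => μ.real (R i ⁻¹' A ∩ B)) l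
      (𝓝 (∑ k, w k * μ.real (Q k ⁻¹' A ∩ B))))
    {A B : Set X} (hA : MeasurableSet A) (hB : MeasurableSet B) :
    Tendsto (fun i => μ.real (R i ⁻¹' A ∩ B)) l (𝓝 (∑ k, w k * μ.real (Q k ⁻¹' A ∩ B))) := by
  have hmeas {s : Set X} (hs : s ∈ 𝒮) : MeasurableSet s :=
    hgen ▸ MeasurableSpace.measurableSet_generateFrom hs
  have hmix (ρ : I → Measure X) [∀ k, IsFiniteMeasure (ρ k)] (C : Set X) :
      (∑ k, w k • ρ k).real C = ∑ k, w k * (ρ k).real C := by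
    rw [measureReal_def, Measure.finsetSum_apply, ENNReal.toReal_sum fun k _ => measure_ne_top _ C]
    exact Finset.sum_congr rfl fun k _ => measureReal_nnreal_smul_apply (w k)
  have hleft {B : Set X} (hB : B ∈ 𝒮) : Tendsto (fun i => μ.real (R i ⁻¹' A ∩ B)) l
      (𝓝 (∑ k, w k * μ.real (Q k ⁻¹' A ∩ B))) := by
    have hκ {S : X → X} (hS : Measurable S) {C : Set X} (hC : MeasurableSet C) :
        ((μ.restrict B).map S).real C = μ.real (S ⁻¹' C ∩ B) := by
      rw [map_measureReal_apply hS hC, measureReal_restrict_apply (hS hC)]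
    have hle (i : ι) : (μ.restrict B).map (R i) ≤ μ :=
      (Measure.map_mono Measure.restrict_le_self (hR i).measurable).trans_eq (hR i).map_eq
    have hlim := tendsto_measureReal_of_isPiSystem (l := l) hle
      (κ' := ∑ k, w k • (μ.restrict B).map (Q k)) hgen hpi huniv (fun C hC => by
        simpa only [hmix, hκ (hQ _) (hmeas hC), hκ (hR _).measurable (hmeas hC)]
          using h C hC B hB) hA
    simpa only [hmix, hκ (hQ _) hA, hκ (hR _).measurable hA] using hlim
  have hκ (D : Set X) {C : Set X} (hC : MeasurableSet C) :
      (μ.restrict D).real C = μ.real (D ∩ C) := by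
    rw [measureReal_restrict_apply hC, inter_comm]
  have hlim := tendsto_measureReal_of_isPiSystem (l := l) (κ := fun i => μ.restrict (R i ⁻¹' A))
    (fun _ => Measure.restrict_le_self) (κ' := ∑ k, w k • μ.restrict (Q k ⁻¹' A)) hgen hpi huniv
    (fun C hC => by simpa only [hmix, hκ _ (hmeas hC)] using hleft hC) hB
  simpa only [hmix, hκ _ hB] using hlim

end Product

section HalfRigid

variable {X Y : Type*} [MeasurableSpace X] [MeasurableSpace Y] {μ : Measure X} {ν : Measure Y}
  {h : ℕ → ℕ} {S : X → X} {T : Y → Y}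

theorem HalfRigidAlong.tendsto_prodMap [IsFiniteMeasure μ] [IsFiniteMeasure ν]
    (hS : HalfRigidAlong h S μ) (hT : HalfRigidAlong h T ν)
    (hSm : MeasurePreserving S μ μ) (hTm : MeasurePreserving T ν ν)
    {C D : Set (X × Y)} (hC : MeasurableSet C) (hD : MeasurableSet D) :
    Tendsto (fun n => (μ.prod ν).real ((Prod.map S T)^[h n] ⁻¹' C ∩ D)) atTop
      (𝓝 (((μ.prod ν).real (C ∩ D) + (μ.prod ν).real (Prod.map S _root_.id ⁻¹' C ∩ D) +
        (μ.prod ν).real (Prod.map _root_.id T ⁻¹' C ∩ D) +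
        (μ.prod ν).real (Prod.map S T ⁻¹' C ∩ D)) / 4)) := by
  let Q : Fin 4 → X × Y → X × Y :=
    ![Prod.map _root_.id _root_.id, Prod.map S _root_.id, Prod.map _root_.id T, Prod.map S T]
  have hQ (k : Fin 4) : Measurable (Q k) := by
    have := hSm.measurable
    have := hTm.measurable
    fin_cases k <;> simp only [Q, Fin.reduceFinMk, Matrix.cons_val] <;> fun_prop
  have hlim := tendsto_measureReal_preimage_inter_of_isPiSystem (μ := μ.prod ν) (l := atTop)
    (fun n => (hSm.prod hTm).iterate (h n)) hQ (fun _ => 1 / 4) generateFrom_prod.symm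
    isPiSystem_prod ⟨univ, .univ, univ, .univ, univ_prod_univ⟩ ?_ hC hD
  · convert hlim using 2
    simp [Q, Fin.sum_univ_four]
    ring
  · rintro _ ⟨A, hA, B, hB, rfl⟩ _ ⟨A', hA', B', hB', rfl⟩
    convert (hS A A' hA hA').mul (hT B B' hB hB') using 2
    · rw [Prod.map_iterate, prodMap_preimage_prod_inter_prod, measureReal_prod_prod]
    · simp only [Q, Fin.sum_univ_four, Matrix.cons_val, prodMap_preimage_prod_inter_prod,
        measureReal_prod_prod, preimage_id]
      push_cast
      ring

theorem ergodic_prodMap_of_forall_ae_eq [IsProbabilityMeasure μ] [IsProbabilityMeasure ν]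
    (hS : Ergodic S μ) (hT : Ergodic T ν)
    (h : ∀ C : Set (X × Y), MeasurableSet C → Prod.map S T ⁻¹' C = C →
      Prod.map _root_.id T ⁻¹' C =ᵐ[μ.prod ν] C) :
    Ergodic (Prod.map S T) (μ.prod ν) := by
  refine ⟨hS.toMeasurePreserving.prod hT.toMeasurePreserving, ⟨fun {C} hC hinv => ?_⟩⟩
  have hsec (x : X) : MeasurableSet (Prod.mk x ⁻¹' C) := measurable_prodMk_left hC
  have hinvariant : S ⁻¹' {x | ν (Prod.mk x ⁻¹' C) = 0} = {x | ν (Prod.mk x ⁻¹' C) = 0} := by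
    ext x
    have hpre : T ⁻¹' (Prod.mk (S x) ⁻¹' C) = Prod.mk x ⁻¹' C :=
      congrArg (Prod.mk x ⁻¹' ·) hinv
    simp only [preimage_ofPred_eq, mem_ofPred_eq, ← hpre,
      hT.measure_preimage (hsec _).nullMeasurableSet]
  have htrivial : ∀ᵐ x ∂μ, ν (Prod.mk x ⁻¹' C) = 0 ∨ ν (Prod.mk x ⁻¹' Cᶜ) = 0 := by
    filter_upwards [Measure.ae_ae_of_ae_prod (h C hC hinv)] with x hx
    have hfiber : T ⁻¹' (Prod.mk x ⁻¹' C) =ᵐ[ν] Prod.mk x ⁻¹' C := hx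
    exact (hT.quasiErgodic.ae_empty_or_univ₀ (hsec x).nullMeasurableSet hfiber).imp
      ae_eq_empty.1 ae_eq_univ.1
  rw [eventuallyConst_set', ae_eq_empty, ae_eq_univ, Measure.measure_prod_null hC,
    Measure.measure_prod_null hC.compl]
  have hzero := measurable_measure_prodMk_left (ν := ν) hC (measurableSet_singleton 0)
  refine (hS.ae_empty_or_univ hzero hinvariant).symm.imp (fun hE => ?_) (fun hE => ?_)
  · exact ae_eq_univ.1 hE
  · filter_upwards [htrivial, measure_eq_zero_iff_ae_notMem.1 (ae_eq_empty.1 hE)] with x hx hne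
    exact hx.resolve_left hne

theorem HalfRigidAlong.ergodic_prodMap [IsProbabilityMeasure μ] [IsProbabilityMeasure ν]
    (hSh : HalfRigidAlong h S μ) (hTh : HalfRigidAlong h T ν)
    (hS : Ergodic S μ) (hT : Ergodic T ν) : Ergodic (Prod.map S T) (μ.prod ν) := by
  refine ergodic_prodMap_of_forall_ae_eq hS hT fun C hC hinv => ?_
  have hTC : MeasurableSet (Prod.map _root_.id T ⁻¹' C) :=
    (measurable_id.prodMap hT.measurable) hC
  have hlim := hSh.tendsto_prodMap hTh hS.toMeasurePreserving hT.toMeasurePreserving hC hC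
  have hconst (n : ℕ) : (Prod.map S T)^[n] ⁻¹' C = C := by
    rw [preimage_iterate_eq]
    exact Function.iterate_fixed hinv n
  simp only [hconst, hinv, inter_self] at hlim
  have havg := tendsto_nhds_unique tendsto_const_nhds hlim
  have hle : (μ.prod ν).real (Prod.map S _root_.id ⁻¹' C ∩ C) ≤ (μ.prod ν).real C :=
    measureReal_mono inter_subset_right
  have hge_real : (μ.prod ν).real C ≤ (μ.prod ν).real (Prod.map _root_.id T ⁻¹' C ∩ C) := by
    linarith
  have hge : (μ.prod ν) C ≤ (μ.prod ν) (Prod.map _root_.id T ⁻¹' C ∩ C) :=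
    (ENNReal.toReal_le_toReal (by finiteness) (by finiteness)).1 hge_real
  have hmass : (μ.prod ν) (Prod.map _root_.id T ⁻¹' C) = (μ.prod ν) C :=
    ((MeasurePreserving.id μ).prod hT.toMeasurePreserving).measure_preimage hC.nullMeasurableSet
  have hinter := (hTC.inter hC).nullMeasurableSet (μ := μ.prod ν)
  exact (ae_eq_of_subset_of_measure_ge inter_subset_left (hmass.trans_le hge) hinter
    (by finiteness)).symm.trans
      (ae_eq_of_subset_of_measure_ge inter_subset_right hge hinter (by finiteness))

theorem HalfRigidAlong.weaklyMixing [IsProbabilityMeasure μ] {T : X → X}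
    (hh : HalfRigidAlong h T μ) (hT : Ergodic T μ) : WeaklyMixing T μ :=
  weaklyMixing_of_ergodic_prodMap (hh.ergodic_prodMap hh hT hT)

theorem HalfRigidAlong.not_stronglyMixing [IsProbabilityMeasure μ] {T : X → X}
    (hh : HalfRigidAlong h T μ) (hlim : Tendsto h atTop atTop) {A : Set X} (hA : MeasurableSet A)
    (hpos : 0 < μ.real A) (hlt : μ.real A < 1 / 2) : ¬ StronglyMixing T μ := by
  intro hmix
  have hprod := (ENNReal.tendsto_toReal (by finiteness)).comp ((hmix A A hA hA).comp hlim)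
  rw [ENNReal.toReal_mul] at hprod
  have heq := tendsto_nhds_unique hprod (hh A A hA hA)
  simp only [← measureReal_def, inter_self] at heq
  nlinarith [measureReal_nonneg (μ := μ) (s := T ⁻¹' A ∩ A)]

end HalfRigid

section Criterion

variable {X : Type*} [MeasurableSpace X] {μ : Measure X} {T : X → X} {h : ℕ → ℕ}

theorem HalfRigidAlong.of_equidistributed [IsFiniteMeasure μ] (hT : Measurable T) {E : ℕ → Set X}
    (hE : ∀ n, MeasurableSet (E n))
    (hhalf : ∀ C, MeasurableSet C → Tendsto (fun n => μ.real (C ∩ E n)) atTop (𝓝 (μ.real C / 2)))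
    (hid : ∀ A, MeasurableSet A →
      Tendsto (fun n => μ.real ((T^[h n] ⁻¹' A) ∆ A ∩ E n)) atTop (𝓝 0))
    (hmap : ∀ A, MeasurableSet A →
      Tendsto (fun n => μ.real ((T^[h n] ⁻¹' A) ∆ (T ⁻¹' A) \ E n)) atTop (𝓝 0)) :
    HalfRigidAlong h T μ := by
  intro A B hA hB
  have hTA := hT hA
  have hclose {R R' F : Set X} (hR : MeasurableSet R) (hR' : MeasurableSet R')
      (hF : MeasurableSet F) :
      |μ.real (R ∩ B ∩ F) - μ.real (R' ∩ B ∩ F)| ≤ μ.real (R ∆ R' ∩ F) := by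
    refine (abs_measureReal_sub_le_measureReal_symmDiff
      ((hR.inter hB).inter hF).nullMeasurableSet ((hR'.inter hB).inter hF).nullMeasurableSet).trans
      (measureReal_mono fun x => ?_)
    simp only [mem_symmDiff, mem_inter_iff]
    tauto
  have hiter (n : ℕ) : MeasurableSet (T^[h n] ⁻¹' A) := hT.iterate (h n) hA
  have hin := squeeze_zero_norm
    (fun n => (Real.norm_eq_abs _).trans_le (hclose (hiter n) hA (hE n))) (hid A hA)
  have hout := squeeze_zero_norm
    (fun n => (Real.norm_eq_abs _).trans_le (hclose (hiter n) hTA (hE n).compl)) (hmap A hA)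
  have hlim := (hin.add hout).add ((hhalf (A ∩ B) (hA.inter hB)).add
    ((hhalf (T ⁻¹' A ∩ B) (hTA.inter hB)).const_sub (μ.real (T ⁻¹' A ∩ B))))
  convert hlim using 2 with n
  · have hsplit (R : Set X) : μ.real (R ∩ B ∩ E n) + μ.real (R ∩ B ∩ (E n)ᶜ) = μ.real (R ∩ B) :=
      measureReal_inter_add_sdiff (hE n)
    linarith [hsplit (T^[h n] ⁻¹' A), hsplit (T ⁻¹' A)]
  · ring

lemma HalfRigidAlong.smul_measure (hT : HalfRigidAlong h T μ) (c : ℝ≥0∞) :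
    HalfRigidAlong h T (c • μ) := by
  intro A B hA hB
  simp only [measureReal_ennreal_smul_apply, ← mul_add, mul_div_assoc]
  exact (hT A B hA hB).const_mul _

end Criterion

section Translation

variable {G ι : Type*} [AddGroup G] [TopologicalSpace G] [IsTopologicalAddGroup G]
  [MeasurableSpace G] [BorelSpace G] {μ : Measure G} [μ.IsAddRightInvariant]
  [μ.InnerRegularCompactLTTop] [IsLocallyFiniteMeasure μ] {l : Filter ι} {t : ι → G} {C : Set G}

theorem tendsto_measureReal_symmDiff_preimage_add_right (ht : Tendsto t l (𝓝 0))
    (hC : MeasurableSet C) (hfin : μ C ≠ ∞) :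
    Tendsto (fun i => μ.real (((· + t i) ⁻¹' C) ∆ C)) l (𝓝 0) := by
  let f : C(G, C(G, G)) := ContinuousMap.curry ⟨fun p : G × G => p.2 + p.1, by fun_prop⟩
  have h := tendsto_measure_symmDiff_preimage_nhds_zero (μ := μ) (ν := μ)
    ((f.continuous.tendsto 0).comp ht) (.of_forall fun i => measurePreserving_add_right μ (t i))
    (measurePreserving_add_right μ 0) hC.nullMeasurableSet hfin
  have hzero : (f 0 : G → G) = _root_.id := funext add_zero
  rw [hzero, preimage_id] at h
  exact (ENNReal.tendsto_toReal ENNReal.zero_ne_top).comp h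

/-- Translating by `t i` hardly moves `C` but exchanges `E i` with its complement. -/
theorem tendsto_measureReal_inter_of_preimage_add_right_eq_compl (ht : Tendsto t l (𝓝 0))
    {E : ι → Set G} (hE : ∀ i, MeasurableSet (E i)) (hcompl : ∀ i, (· + t i) ⁻¹' E i = (E i)ᶜ)
    (hC : MeasurableSet C) (hfin : μ C ≠ ∞) :
    Tendsto (fun i => μ.real (C ∩ E i)) l (𝓝 (μ.real C / 2)) := by
  have hdiff : Tendsto (fun i => μ.real (C ∩ E i) - μ.real (C \ E i)) l (𝓝 0) := by
    refine squeeze_zero_norm (fun i => ?_)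
      (tendsto_measureReal_symmDiff_preimage_add_right ht hC hfin)
    have hpres := measurePreserving_add_right μ (t i)
    have hmove : μ.real (C ∩ E i) = μ.real ((· + t i) ⁻¹' C \ E i) := by
      rw [← hpres.measureReal_preimage (hC.inter (hE i)).nullMeasurableSet, preimage_inter, hcompl]
      rfl
    have hfin' : μ ((· + t i) ⁻¹' C) ≠ ∞ := by
      rwa [hpres.measure_preimage hC.nullMeasurableSet]
    rw [hmove]
    refine (abs_measureReal_sub_le_measureReal_symmDiff'
      ((hpres.measurable hC).diff (hE i)).nullMeasurableSet (hC.diff (hE i)).nullMeasurableSet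
      (measure_ne_top_of_subset sdiff_subset hfin')
      (measure_ne_top_of_subset sdiff_subset hfin)).trans (measureReal_mono (fun x => ?_) ?_)
    · simp only [mem_symmDiff, Set.mem_sdiff]
      tauto
    · exact measure_ne_top_of_subset symmDiff_subset_union (measure_union_ne_top hfin' hfin)
  have hlim := (hdiff.const_add (μ.real C)).div_const 2
  rw [add_zero] at hlim
  refine hlim.congr fun i => ?_
  rw [← measureReal_inter_add_sdiff (hE i) hfin]
  ring

end Translation

section Rotation

/-- The coordinate in `[0, 1)` of a point of the unit circle. -/
noncomputable def circleCoord (θ : UnitAddCircle) : ℝ := AddCircle.measurableEquivIco 1 0 θ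

lemma measurable_circleCoord : Measurable circleCoord :=
  measurable_subtype_coe.comp (AddCircle.measurableEquivIco 1 0).measurable

lemma circleCoord_coe (x : ℝ) : circleCoord (x : UnitAddCircle) = Int.fract x := by
  have h := AddCircle.coe_equivIco_mk_apply (1 : ℝ) x
  rwa [div_one, mul_one] at h

lemma measurePreserving_coe_unitAddCircle (a : ℝ) :
    MeasurePreserving ((↑) : ℝ → UnitAddCircle) (volume.restrict (Ico a (a + 1))) := by
  rw [restrict_Ico_eq_restrict_Ioc]
  exact UnitAddCircle.measurePreserving_mk a

lemma measurePreserving_circleCoord :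
    MeasurePreserving circleCoord volume (volume.restrict (Ico 0 1)) := by
  refine ⟨measurable_circleCoord, ?_⟩
  have hcoe := measurePreserving_coe_unitAddCircle 0
  rw [zero_add] at hcoe
  rw [← hcoe.map_eq, Measure.map_map measurable_circleCoord hcoe.measurable]
  conv_rhs => rw [← Measure.map_id (μ := volume.restrict (Ico (0 : ℝ) 1))]
  refine Measure.map_congr ?_
  filter_upwards [ae_restrict_mem measurableSet_Ico] with x hx
  exact (circleCoord_coe x).trans (Int.fract_eq_self.2 hx)

lemma measurePreserving_fract (a : ℝ) :
    MeasurePreserving (Int.fract : ℝ → ℝ) (volume.restrict (Ico a (a + 1)))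
      (volume.restrict (Ico 0 1)) :=
  funext circleCoord_coe ▸
    measurePreserving_circleCoord.comp (measurePreserving_coe_unitAddCircle a)

lemma fract_fract_add (x y : ℝ) : Int.fract (Int.fract x + y) = Int.fract (x + y) :=
  Int.fract_eq_fract.2 ⟨-⌊x⌋, by push_cast [Int.fract]; ring⟩

lemma ergodic_fract_add {α : ℝ} (hα : Irrational α) :
    Ergodic (fun x => Int.fract (x + α)) (volume.restrict (Ico 0 1)) := by
  have hrot : Ergodic (fun θ : UnitAddCircle => θ + (α : UnitAddCircle)) := by
    rw [AddCircle.ergodic_add_right, addOrderOf_eq_zero_iff,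
      AddCircle.isOfFinAddOrder_iff_exists_rat_eq_div]
    rintro ⟨r, hr⟩
    exact hα ⟨r, by simpa using hr⟩
  refine measurePreserving_circleCoord.ergodic_of_ergodic_semiconj hrot (by fun_prop) fun θ => ?_
  obtain ⟨x, rfl⟩ := QuotientAddGroup.mk_surjective θ
  change circleCoord ((x : UnitAddCircle) + (α : UnitAddCircle)) =
    Int.fract (circleCoord (x : UnitAddCircle) + α)
  rw [← AddCircle.coe_add, circleCoord_coe, circleCoord_coe, fract_fract_add]

end Rotation

section Tower

/-- The tower of height two over the rotation of `[0, 1)` by `α`, with second floor `[1, 3/2)` above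
`[0, 1/2)`: a point of `[0, 1/2)` moves up by `1`, every other point of `[0, 3/2)` moves to the
rotated position of the base point below it (which `Int.fract` computes in both cases, since the
second floor is the translate of `[0, 1/2)` by `1`). Values outside `[0, 3/2)` are irrelevant. -/
noncomputable def towerMap (α x : ℝ) : ℝ := if x < 1 / 2 then x + 1 else Int.fract (x + α)

/-- The inverse of `towerMap` on `[0, 3/2)`. -/
noncomputable def towerInv (α x : ℝ) : ℝ :=
  if 1 ≤ x then x - 1 else
    if Int.fract (x - α) < 1 / 2 then Int.fract (x - α) + 1 else Int.fract (x - α)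

variable {α x : ℝ}

lemma measurable_towerMap (α : ℝ) : Measurable (towerMap α) :=
  Measurable.ite measurableSet_Iio (by fun_prop) (by fun_prop)

lemma measurable_towerInv (α : ℝ) : Measurable (towerInv α) :=
  Measurable.ite measurableSet_Ici (by fun_prop)
    (Measurable.ite (measurableSet_lt (by fun_prop) (by fun_prop)) (by fun_prop) (by fun_prop))

lemma towerMap_of_lt (h : x < 1 / 2) : towerMap α x = x + 1 := if_pos h

lemma towerMap_of_ge (h : 1 / 2 ≤ x) : towerMap α x = Int.fract (x + α) := if_neg h.not_gt

lemma mapsTo_towerMap (α : ℝ) : MapsTo (towerMap α) (Icc 0 (3 / 2)) (Icc 0 (3 / 2)) := by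
  rintro x ⟨hx, -⟩
  have := Int.fract_nonneg (x + α)
  have := Int.fract_lt_one (x + α)
  unfold towerMap
  split_ifs <;> constructor <;> linarith

lemma mapsTo_towerInv (α : ℝ) : MapsTo (towerInv α) (Icc 0 (3 / 2)) (Icc 0 (3 / 2)) := by
  rintro x ⟨-, hx1⟩
  have := Int.fract_nonneg (x - α)
  have := Int.fract_lt_one (x - α)
  unfold towerInv
  split_ifs <;> constructor <;> linarith

lemma towerInv_towerMap (α : ℝ) (hx : x ∈ Ico (0 : ℝ) (3 / 2)) :
    towerInv α (towerMap α x) = x := by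
  obtain ⟨hx0, hx1⟩ := hx
  rcases lt_or_ge x (1 / 2) with h | h
  · rw [towerMap_of_lt h, towerInv, if_pos (by linarith), add_sub_cancel_right]
  · have hback : Int.fract (Int.fract (x + α) - α) = Int.fract x := by
      rw [sub_eq_add_neg, fract_fract_add, add_neg_cancel_right]
    simp only [towerMap_of_ge h, towerInv, (Int.fract_lt_one (x + α)).not_ge, if_false, hback]
    rcases lt_or_ge x 1 with hbase | hfloor
    · rw [Int.fract_eq_self.2 ⟨hx0, hbase⟩, if_neg h.not_gt]
    · rw [← Int.fract_sub_one, Int.fract_eq_self.2 ⟨by linarith, by linarith⟩,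
        if_pos (by linarith), sub_add_cancel]

lemma towerMap_towerInv (α : ℝ) (hx : x ∈ Ico (0 : ℝ) (3 / 2)) :
    towerMap α (towerInv α x) = x := by
  obtain ⟨hx0, hx1⟩ := hx
  rcases lt_or_ge x 1 with hbase | hfloor
  · have hforth : Int.fract (Int.fract (x - α) + α) = x := by
      rw [fract_fract_add, sub_add_cancel, Int.fract_eq_self.2 ⟨hx0, hbase⟩]
    rw [towerInv, if_neg hbase.not_ge]
    split_ifs with h
    · rw [towerMap_of_ge (by linarith [Int.fract_nonneg (x - α)]), add_right_comm,
        Int.fract_add_one, hforth]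
    · rw [towerMap_of_ge (not_lt.1 h), hforth]
  · rw [towerInv, if_pos hfloor, towerMap_of_lt (by linarith), sub_add_cancel]

lemma measurePreserving_add_right_Ico (a b t : ℝ) :
    MeasurePreserving (· + t) (volume.restrict (Ico a b))
      (volume.restrict (Ico (a + t) (b + t))) := by
  convert (measurePreserving_add_right volume t).restrict_preimage
    (measurableSet_Ico (a := a + t) (b := b + t)) using 2
  simp

lemma measurePreserving_towerMap (α : ℝ) :
    MeasurePreserving (towerMap α) (volume.restrict (Ico 0 (3 / 2)))
      (volume.restrict (Ico 0 (3 / 2))) := by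
  have hlower : MeasurePreserving (towerMap α) (volume.restrict (Ico 0 (1 / 2)))
      (volume.restrict (Ico 1 (3 / 2))) := by
    convert (measurePreserving_add_right_Ico 0 (1 / 2) 1).congr (measurable_towerMap α) ?_ using 3
    · norm_num
    · norm_num
    · filter_upwards [ae_restrict_mem measurableSet_Ico] with x hx
      exact (towerMap_of_lt hx.2).symm
  have hupper : MeasurePreserving (towerMap α) (volume.restrict (Ico (1 / 2) (3 / 2)))
      (volume.restrict (Ico 0 1)) := by
    have hshift := measurePreserving_add_right_Ico (1 / 2) (3 / 2) α
    rw [show (3 / 2 + α : ℝ) = 1 / 2 + α + 1 by ring] at hshift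
    refine ((measurePreserving_fract (1 / 2 + α)).comp hshift).congr (measurable_towerMap α) ?_
    filter_upwards [ae_restrict_mem measurableSet_Ico] with x hx
    exact (towerMap_of_ge hx.1).symm
  have hsplit {a b c : ℝ} (hab : a ≤ b) (hbc : b ≤ c) : volume.restrict (Ico a c) =
      volume.restrict (Ico a b) + volume.restrict (Ico b c) := by
    rw [← Ico_union_Ico_eq_Ico hab hbc,
      Measure.restrict_union Ico_disjoint_Ico_same measurableSet_Ico]
  refine ⟨measurable_towerMap α, ?_⟩
  conv_lhs => rw [hsplit (b := 1 / 2) (by norm_num) (by norm_num),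
    Measure.map_add _ _ (measurable_towerMap α), hlower.map_eq, hupper.map_eq]
  rw [hsplit (c := 3 / 2) zero_le_one (by norm_num), add_comm]

/-- The 1-periodic indicator function of `[0, 1/2)`, so that the return time of `x ∈ [0, 1)` to the
base of the tower is `1 + halfIndicator x`. -/
noncomputable def halfIndicator (x : ℝ) : ℕ := if Int.fract x < 1 / 2 then 1 else 0

lemma towerMap_iterate_return (α : ℝ) (hx : x ∈ Ico (0 : ℝ) 1) :
    (towerMap α)^[1 + halfIndicator x] x = Int.fract (x + α) := by
  rw [halfIndicator, Int.fract_eq_self.2 hx]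
  split_ifs with h
  · change towerMap α (towerMap α x) = _
    rw [towerMap_of_lt h, towerMap_of_ge (by linarith [hx.1]), add_right_comm, Int.fract_add_one]
  · exact towerMap_of_ge (not_lt.1 h)

lemma restrict_Ico_eq_zero_of_towerMap_invariant {A : Set ℝ} (hinv : towerMap α ⁻¹' A = A)
    (hbase : volume.restrict (Ico 0 1) A = 0) : volume.restrict (Ico 0 (3 / 2)) A = 0 := by
  rw [Measure.restrict_apply' measurableSet_Ico] at hbase ⊢
  have hsub : A ∩ Ico 0 (3 / 2) ⊆ A ∩ Ico 0 1 ∪ (· + (-1)) ⁻¹' (A ∩ Ico 0 1) := by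
    rintro x ⟨hxA, hx0, hx1⟩
    rcases lt_or_ge x 1 with h | h
    · exact .inl ⟨hxA, hx0, h⟩
    · refine .inr ⟨?_, by constructor <;> linarith⟩
      rwa [← hinv, mem_preimage, towerMap_of_lt (by linarith), neg_add_cancel_right]
  refine measure_mono_null hsub (measure_union_null hbase ?_)
  rwa [measure_preimage_add_right]

theorem ergodic_towerMap (hα : Irrational α) :
    Ergodic (towerMap α) (volume.restrict (Ico 0 (3 / 2))) := by
  refine ⟨measurePreserving_towerMap α, ⟨fun {A} hA hinv => ?_⟩⟩
  have hiter (n : ℕ) : (towerMap α)^[n] ⁻¹' A = A := by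
    rw [preimage_iterate_eq]
    exact Function.iterate_fixed hinv n
  have hrot : (fun x => Int.fract (x + α)) ⁻¹' A =ᵐ[volume.restrict (Ico 0 1)] A := by
    refine eventuallyEq_set.2 ?_
    filter_upwards [ae_restrict_mem measurableSet_Ico] with x hx
    rw [mem_preimage, ← towerMap_iterate_return α hx, ← mem_preimage, hiter]
  rw [eventuallyConst_set', ae_eq_empty, ae_eq_univ]
  refine ((ergodic_fract_add hα).quasiErgodic.ae_empty_or_univ₀ hA.nullMeasurableSet hrot).imp
    (fun hnull => ?_) (fun hfull => ?_)
  · exact restrict_Ico_eq_zero_of_towerMap_invariant hinv (ae_eq_empty.1 hnull)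
  · exact restrict_Ico_eq_zero_of_towerMap_invariant (by rw [preimage_compl, hinv])
      (ae_eq_univ.1 hfull)

end Tower

section Hermite

lemma sum_range_add_ediv {q : ℕ} (hq : q ≠ 0) (n : ℤ) :
    ∑ k ∈ Finset.range q, (n + k) / (q : ℤ) = n := by
  have hq' : (q : ℤ) ≠ 0 := Nat.cast_ne_zero.2 hq
  have hsucc (n : ℤ) : ∑ k ∈ Finset.range q, (n + 1 + k) / (q : ℤ) =
      ∑ k ∈ Finset.range q, (n + k) / (q : ℤ) + 1 := by
    have htelescope := Finset.sum_range_sub (fun k : ℕ => (n + k) / (q : ℤ)) q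
    rw [Finset.sum_sub_distrib, Int.add_ediv_of_dvd_right (dvd_refl _), Int.ediv_self hq']
      at htelescope
    push_cast at htelescope
    simp only [← add_assoc, add_right_comm n _ 1, add_zero] at htelescope
    linarith
  induction n using Int.induction_on with
  | zero =>
    refine Finset.sum_eq_zero fun k hk => ?_
    rw [zero_add]
    exact Int.ediv_eq_zero_of_lt (by positivity) (by exact_mod_cast Finset.mem_range.1 hk)
  | succ n ih => rw [hsucc, ih]
  | pred n ih =>
    have h := hsucc (-(n : ℤ) - 1)
    rw [sub_add_cancel, ih] at h
    linarith

/-- Hermite's identity. -/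
theorem sum_floor_add_div {K : Type*} [Field K] [LinearOrder K] [IsStrictOrderedRing K]
    [FloorRing K] {q : ℕ} (hq : q ≠ 0) (x : K) :
    ∑ k ∈ Finset.range q, ⌊x + k / q⌋ = ⌊q * x⌋ := by
  have hfloor (k : ℕ) : ⌊x + k / q⌋ = (⌊q * x⌋ + k) / (q : ℤ) := by
    rw [← Int.floor_add_natCast, ← Int.floor_div_natCast]
    congr 1
    field_simp
  simp only [hfloor, sum_range_add_ediv hq]

lemma sum_range_mul_of_periodic {M : Type*} [AddCommMonoid M] {f : ℕ → M} {p q : ℕ}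
    (hf : Function.Periodic f q) (hpq : p.Coprime q) :
    ∑ j ∈ Finset.range q, f (j * p) = ∑ k ∈ Finset.range q, f k := by
  have hmaps : MapsTo (fun j => j * p % q) (Finset.range q : Set ℕ) (Finset.range q) :=
    fun j hj => by simpa using Nat.mod_lt _ (Nat.zero_lt_of_lt (Finset.mem_range.1 hj))
  have hinj : InjOn (fun j => j * p % q) (Finset.range q : Set ℕ) := by
    intro i hi j hj hij
    exact (Nat.ModEq.cancel_right_of_coprime hpq.symm hij).eq_of_lt_of_lt
      (Finset.mem_range.1 hi) (Finset.mem_range.1 hj)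
  exact Finset.sum_nbij (fun j => j * p % q) hmaps hinj
    (Finset.surjOn_of_injOn_of_card_le _ hmaps hinj le_rfl) fun _ _ => (hf.map_mod_nat _).symm

end Hermite

section VisitCounts

lemma halfIndicator_le_one (x : ℝ) : halfIndicator x ≤ 1 := by
  unfold halfIndicator
  split_ifs <;> simp

lemma halfIndicator_fract (x : ℝ) : halfIndicator (Int.fract x) = halfIndicator x := by
  simp only [halfIndicator, Int.fract_fract]

lemma halfIndicator_add_intCast (x : ℝ) (n : ℤ) : halfIndicator (x + n) = halfIndicator x := by
  simp only [halfIndicator, Int.fract_add_intCast]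

lemma measurable_halfIndicator : Measurable halfIndicator :=
  Measurable.ite (measurableSet_lt measurable_fract measurable_const)
    measurable_const measurable_const

lemma halfIndicator_eq_floor (x : ℝ) : (halfIndicator x : ℤ) = 1 - (⌊x + 1 / 2⌋ - ⌊x⌋) := by
  have hnonneg := Int.fract_nonneg x
  have hlt := Int.fract_lt_one x
  have hx := Int.floor_add_fract x
  unfold halfIndicator
  split_ifs with h
  · have : ⌊x + 1 / 2⌋ = ⌊x⌋ := Int.floor_eq_iff.2 (by constructor <;> linarith)
    rw [this]
    simp
  · have : ⌊x + 1 / 2⌋ = ⌊x⌋ + 1 := Int.floor_eq_iff.2 (by push_cast; constructor <;> linarith)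
    rw [this]
    simp

variable {q p : ℕ}

lemma sum_halfIndicator_add_div (hq : Odd q) (x : ℝ) :
    ∑ k ∈ Finset.range q, halfIndicator (x + k / q) = q / 2 + halfIndicator (q * x) := by
  have hshift (k : ℕ) : x + (k : ℝ) / q + 1 / 2 = (x + 1 / 2) + k / q := by ring
  have hmid : (q : ℝ) * (x + 1 / 2) = q * x + 1 / 2 + (q / 2 : ℕ) := by
    have : (2 * (q / 2 : ℕ) + 1 : ℝ) = q := by exact_mod_cast Nat.two_mul_div_two_add_one_of_odd hq
    linear_combination (-1 / 2) * this
  have hq' := Nat.two_mul_div_two_add_one_of_odd hq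
  zify
  simp only [halfIndicator_eq_floor, Finset.sum_sub_distrib, hshift,
    sum_floor_add_div hq.pos.ne', hmid, Int.floor_add_natCast, Finset.sum_const, Finset.card_range,
    nsmul_one]
  omega

lemma sum_halfIndicator_add_mul_div (hq : Odd q) (hpq : p.Coprime q) (x : ℝ) :
    ∑ j ∈ Finset.range q, halfIndicator (x + (j * p : ℕ) / q) = q / 2 + halfIndicator (q * x) := by
  have hq' : (q : ℝ) ≠ 0 := Nat.cast_ne_zero.2 hq.pos.ne'
  rw [← sum_halfIndicator_add_div hq]
  refine sum_range_mul_of_periodic (f := fun k => halfIndicator (x + k / q)) (fun k => ?_) hpq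
  simp only [Nat.cast_add, add_div, div_self hq', ← add_assoc]
  exact_mod_cast halfIndicator_add_intCast (x + k / q) 1

/-- The points at distance more than `η` from the grid `ℤ / (2q)`. A perturbation by at most `η`
does not carry such a point across the grid. -/
def FarFromGrid (q : ℕ) (η x : ℝ) : Prop := ∀ i : ℤ, η < |x - i / (2 * q)|

variable {η α x s : ℝ}

lemma FarFromGrid.floor_eq (hq : q ≠ 0) (hx : FarFromGrid q η x) (hs : |s| ≤ η) (i : ℤ) :
    ⌊x + i / (2 * q) + s⌋ = ⌊x + i / (2 * q)⌋ := by
  have hgrid (n : ℤ) : η < |x + i / (2 * q) - n| := by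
    convert hx (2 * q * n - i) using 2
    push_cast
    field_simp
    ring
  have hle := Int.floor_le (x + i / (2 * q))
  have hlt := Int.lt_floor_add_one (x + i / (2 * q))
  have hlower := hgrid ⌊x + i / (2 * q)⌋
  have hupper := hgrid (⌊x + i / (2 * q)⌋ + 1)
  push_cast at hupper
  rw [abs_of_nonneg (by linarith)] at hlower
  rw [abs_of_neg (by linarith)] at hupper
  obtain ⟨hs0, hs1⟩ := abs_le.1 hs
  exact Int.floor_eq_iff.2 (by constructor <;> linarith)

lemma FarFromGrid.halfIndicator_eq (hq : q ≠ 0) (hx : FarFromGrid q η x) (hs : |s| ≤ η) (k : ℕ) :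
    halfIndicator (x + k / q + s) = halfIndicator (x + k / q) := by
  have hleft := hx.floor_eq hq hs (2 * k)
  have hright := hx.floor_eq hq hs (2 * k + q)
  rw [show ((2 * k : ℤ) : ℝ) / (2 * q) = k / q by push_cast; field_simp] at hleft
  rw [show ((2 * k + q : ℤ) : ℝ) / (2 * q) = k / q + 1 / 2 by push_cast; field_simp,
    ← add_assoc] at hright
  zify
  rw [halfIndicator_eq_floor, halfIndicator_eq_floor, hleft, add_right_comm _ s, hright]

lemma FarFromGrid.sum_halfIndicator (hq : Odd q) (hpq : p.Coprime q)
    (hx : FarFromGrid q |q * α - p| x) :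
    ∑ j ∈ Finset.range q, halfIndicator (x + j * α) = q / 2 + halfIndicator (q * x) := by
  have hq0 := hq.pos.ne'
  rw [← sum_halfIndicator_add_mul_div hq hpq]
  refine Finset.sum_congr rfl fun j hj => ?_
  have hj' : (j : ℝ) / q ≤ 1 :=
    div_le_one_of_le₀ (by exact_mod_cast (Finset.mem_range.1 hj).le) (Nat.cast_nonneg q)
  have hs : |j / q * (q * α - p)| ≤ |q * α - p| := by
    rw [abs_mul, abs_of_nonneg (by positivity)]
    exact mul_le_of_le_one_left (abs_nonneg _) hj'
  rw [← hx.halfIndicator_eq hq0 hs]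
  congr 1
  push_cast
  field_simp
  ring

end VisitCounts

section TowerPowers

variable {q p : ℕ} {α x : ℝ}

lemma towerMap_iterate_return_sum (α : ℝ) (hx : x ∈ Ico (0 : ℝ) 1) (k : ℕ) :
    (towerMap α)^[k + ∑ j ∈ Finset.range k, halfIndicator (x + j * α)] x =
      Int.fract (x + k * α) := by
  induction k with
  | zero => simpa using (Int.fract_eq_self.2 hx).symm
  | succ k ih =>
    have htime : k + 1 + ∑ j ∈ Finset.range (k + 1), halfIndicator (x + j * α) =
        (1 + halfIndicator (Int.fract (x + k * α))) +
          (k + ∑ j ∈ Finset.range k, halfIndicator (x + j * α)) := by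
      rw [Finset.sum_range_succ, halfIndicator_fract]
      ring
    rw [htime, Function.iterate_add_apply, ih,
      towerMap_iterate_return α ⟨Int.fract_nonneg _, Int.fract_lt_one _⟩, fract_fract_add,
      Nat.cast_succ, add_one_mul, add_assoc]

lemma FarFromGrid.add_mem_Ico_one (hq : q ≠ 0) (hx : FarFromGrid q |q * α - p| x)
    (hx1 : x ∈ Ico (0 : ℝ) 1) : x + (q * α - p) ∈ Ico (0 : ℝ) 1 := by
  have h := hx.floor_eq hq le_rfl 0
  rwa [Int.cast_zero, zero_div, add_zero, Int.floor_eq_zero_iff.2 hx1,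
    Int.floor_eq_zero_iff] at h

lemma FarFromGrid.towerMap_iterate_of_mem_Ico_one (hq : Odd q) (hpq : p.Coprime q)
    (hx : FarFromGrid q |q * α - p| x) (hx1 : x ∈ Ico (0 : ℝ) 1) :
    (towerMap α)^[q + q / 2 + 1] x =
      (towerMap α)^[1 - halfIndicator (q * x)] (x + (q * α - p)) := by
  have hreturn := towerMap_iterate_return_sum α hx1 q
  have hfract : Int.fract (x + q * α) = x + (q * α - p) := by
    rw [← Int.fract_eq_self.2 (hx.add_mem_Ico_one hq.pos.ne' hx1), ← add_sub_assoc,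
      Int.fract_sub_natCast]
  rw [hx.sum_halfIndicator hq hpq, hfract] at hreturn
  have htime : q + q / 2 + 1 =
      (1 - halfIndicator (q * x)) + (q + (q / 2 + halfIndicator (q * x))) := by
    have := halfIndicator_le_one (q * x)
    omega
  rw [htime, Function.iterate_add_apply, hreturn]

lemma FarFromGrid.sub_one (hq : q ≠ 0) {η : ℝ} (hx : FarFromGrid q η x) :
    FarFromGrid q η (x - 1) := by
  intro i
  convert hx (i + 2 * q) using 2
  push_cast
  field_simp
  ring

lemma FarFromGrid.sub_one_add_lt_half (hq : q ≠ 0) (hx : FarFromGrid q |q * α - p| x)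
    (hx0 : 1 ≤ x) (hx1 : x < 3 / 2) : x - 1 + (q * α - p) < 1 / 2 := by
  have hfloor := (hx.sub_one hq).floor_eq hq le_rfl q
  have hzero : ⌊x - 1 + 1 / 2⌋ = 0 := Int.floor_eq_zero_iff.2 (by constructor <;> linarith)
  rw [show ((q : ℤ) : ℝ) / (2 * q) = 1 / 2 by push_cast; field_simp, hzero,
    Int.floor_eq_zero_iff] at hfloor
  linarith [hfloor.2]

lemma FarFromGrid.add_mem_Ico (hq : q ≠ 0) (hx : FarFromGrid q |q * α - p| x)
    (hxI : x ∈ Ico (0 : ℝ) (3 / 2)) : x + (q * α - p) ∈ Ico (0 : ℝ) (3 / 2) := by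
  rcases lt_or_ge x 1 with hbase | hfloor
  · have h := hx.add_mem_Ico_one hq ⟨hxI.1, hbase⟩
    exact ⟨h.1, h.2.trans (by norm_num)⟩
  · have h := (hx.sub_one hq).add_mem_Ico_one hq ⟨by linarith, by linarith [hxI.2]⟩
    exact ⟨by linarith [h.1], by linarith [hx.sub_one_add_lt_half hq hfloor hxI.2]⟩

/-- The `q`-th return to the base takes `q + q / 2` or `q + q / 2 + 1` steps. -/
theorem FarFromGrid.towerMap_iterate (hq : Odd q) (hpq : p.Coprime q)
    (hx : FarFromGrid q |q * α - p| x) (hxI : x ∈ Ico (0 : ℝ) (3 / 2)) :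
    (towerMap α)^[q + q / 2 + 1] x =
      (towerMap α)^[1 - halfIndicator (q * x)] (x + (q * α - p)) := by
  have hq0 := hq.pos.ne'
  rcases lt_or_ge x 1 with hbase | hfloor
  · exact hx.towerMap_iterate_of_mem_Ico_one hq hpq ⟨hxI.1, hbase⟩
  have hx1 : towerMap α (x - 1) = x := by
    rw [towerMap_of_lt (by linarith [hxI.2]), sub_add_cancel]
  have hmove : towerMap α (x - 1 + (q * α - p)) = x + (q * α - p) := by
    rw [towerMap_of_lt (hx.sub_one_add_lt_half hq0 hfloor hxI.2)]
    ring
  have hind : halfIndicator (q * (x - 1)) = halfIndicator (q * x) := by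
    rw [mul_sub_one, sub_eq_add_neg]
    exact_mod_cast halfIndicator_add_intCast (q * x) (-q)
  have h := (hx.sub_one hq0).towerMap_iterate_of_mem_Ico_one hq hpq
    ⟨by linarith, by linarith [hxI.2]⟩
  conv_lhs => rw [← hx1, (Function.Commute.iterate_self _ _).eq, h]
  rw [← (Function.Commute.iterate_self (towerMap α) _).eq, hmove, hind]

end TowerPowers

section WeakLimit

/-- The points whose `q`-th return to the base takes the longer of the two possible times, an
alternating union of intervals of length `1 / (2q)`. -/
def lateSet (q : ℕ) : Set ℝ := {x | halfIndicator (q * x) = 1}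

lemma measurableSet_lateSet (q : ℕ) : MeasurableSet (lateSet q) :=
  (measurable_halfIndicator.comp (measurable_const_mul _)) (measurableSet_singleton 1)

lemma halfIndicator_add_half (x : ℝ) : halfIndicator (x + 1 / 2) = 1 - halfIndicator x := by
  have h := halfIndicator_eq_floor (x + 1 / 2)
  rw [add_assoc, add_halves, Int.floor_add_one] at h
  have := halfIndicator_eq_floor x
  omega

lemma preimage_add_lateSet {q : ℕ} (hq : q ≠ 0) :
    (· + (2 * q : ℝ)⁻¹) ⁻¹' lateSet q = (lateSet q)ᶜ := by
  ext x
  have hmul : (q : ℝ) * (x + (2 * q : ℝ)⁻¹) = q * x + 1 / 2 := by field_simp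
  have := halfIndicator_le_one (q * x)
  simp only [lateSet, mem_preimage, mem_ofPred_eq, mem_compl_iff, hmul, halfIndicator_add_half]
  omega

lemma tendsto_measureReal_inter_lateSet {q : ℕ → ℕ} (hq0 : ∀ n, q n ≠ 0)
    (hq : Tendsto q atTop atTop) {C : Set ℝ} (hC : MeasurableSet C) (hfin : volume C ≠ ∞) :
    Tendsto (fun n => volume.real (C ∩ lateSet (q n))) atTop (𝓝 (volume.real C / 2)) := by
  have hstep : Tendsto (fun n => (2 * q n : ℝ)⁻¹) atTop (𝓝 0) :=
    ((tendsto_natCast_atTop_atTop.comp hq).const_mul_atTop zero_lt_two).inv_tendsto_atTop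
  exact tendsto_measureReal_inter_of_preimage_add_right_eq_compl hstep
    (fun n => measurableSet_lateSet (q n)) (fun n => preimage_add_lateSet (hq0 n)) hC hfin

lemma measureReal_not_farFromGrid_le {q : ℕ} (hq : q ≠ 0) {η : ℝ} (hη : 0 ≤ η)
    (hqη : q * η < 1 / 2) :
    volume.real ({x | ¬ FarFromGrid q η x} ∩ Ico 0 (3 / 2)) ≤ 12 * (q * η) := by
  have hq1 : (1 : ℝ) ≤ q := by exact_mod_cast Nat.one_le_iff_ne_zero.2 hq
  let J (i : ℤ) : Set ℝ := Icc (i / (2 * q) - η) (i / (2 * q) + η)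
  have hsub : {x | ¬ FarFromGrid q η x} ∩ Ico 0 (3 / 2) ⊆
      ⋃ i ∈ Finset.Icc (-1 : ℤ) (3 * q + 1), J i := by
    rintro x ⟨hx, hx0, hx1⟩
    simp only [FarFromGrid, mem_ofPred_eq, not_forall, not_lt] at hx
    obtain ⟨i, hi⟩ := hx
    obtain ⟨hlower, hupper⟩ := abs_le.1 hi
    have hgrid : (i : ℝ) = i / (2 * q) * (2 * q) := by field_simp
    have hi0 : -2 < i := by rify; rw [hgrid]; nlinarith
    have hi1 : i < 3 * q + 2 := by rify; rw [hgrid]; nlinarith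
    have hmem : i ∈ Finset.Icc (-1 : ℤ) (3 * q + 1) := Finset.mem_Icc.2 ⟨by omega, by omega⟩
    exact mem_biUnion hmem ⟨by linarith, by linarith⟩
  have hJ (i : ℤ) : volume.real (J i) = 2 * η := by
    rw [Real.volume_real_Icc_of_le (by linarith)]
    ring
  have hfin : volume (⋃ i ∈ Finset.Icc (-1 : ℤ) (3 * q + 1), J i) ≠ ∞ :=
    (measure_biUnion_lt_top (Finset.finite_toSet _) fun _ _ => measure_Icc_lt_top).ne
  calc volume.real ({x | ¬ FarFromGrid q η x} ∩ Ico 0 (3 / 2))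
    _ ≤ ∑ i ∈ Finset.Icc (-1 : ℤ) (3 * q + 1), volume.real (J i) :=
      (measureReal_mono hsub hfin).trans (measureReal_biUnion_finset_le _ _)
    _ = (3 * q + 3) * (2 * η) := by
      rw [Finset.sum_congr rfl fun i _ => hJ i, Finset.sum_const, Int.card_Icc, nsmul_eq_mul,
        show (3 * q + 1 + 1 - -1 : ℤ).toNat = 3 * q + 3 by omega]
      push_cast
      rfl
    _ ≤ 12 * (q * η) := by nlinarith

variable {α : ℝ} {q p : ℕ → ℕ}

lemma tendsto_mul_sub_of_tendsto_mul_abs (hq0 : ∀ n, q n ≠ 0)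
    (happrox : Tendsto (fun n => q n * |q n * α - p n|) atTop (𝓝 0)) :
    Tendsto (fun n => q n * α - p n) atTop (𝓝 0) := by
  refine squeeze_zero_norm (fun n => ?_) happrox
  rw [Real.norm_eq_abs]
  exact le_mul_of_one_le_left (abs_nonneg _) (by exact_mod_cast Nat.one_le_iff_ne_zero.2 (hq0 n))

/-- The points near the grid and those which the translation by `q α - p` carries across the
boundary of `D` are negligible. -/
lemma tendsto_measureReal_of_subset_symmDiff_of_farFromGrid (hq0 : ∀ n, q n ≠ 0)
    (happrox : Tendsto (fun n => q n * |q n * α - p n|) atTop (𝓝 0))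
    {D : Set ℝ} (hD : MeasurableSet D) {F : ℕ → Set ℝ}
    (hF : ∀ n, ∀ x ∈ F n ∩ Ico 0 (3 / 2), FarFromGrid (q n) |q n * α - p n| x →
      x ∈ ((· + (q n * α - p n)) ⁻¹' D) ∆ D) :
    Tendsto (fun n => (volume.restrict (Ico 0 (3 / 2))).real (F n)) atTop (𝓝 0) := by
  set I := Ico (0 : ℝ) (3 / 2)
  have hfin : volume (D ∩ I) ≠ ∞ :=
    measure_ne_top_of_subset inter_subset_right measure_Ico_lt_top.ne
  let Δ (n : ℕ) := ((· + (q n * α - p n)) ⁻¹' (D ∩ I)) ∆ (D ∩ I)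
  have hΔ : Tendsto (fun n => volume.real (Δ n)) atTop (𝓝 0) :=
    tendsto_measureReal_symmDiff_preimage_add_right
      (tendsto_mul_sub_of_tendsto_mul_abs hq0 happrox) (hD.inter measurableSet_Ico) hfin
  have hΔfin (n : ℕ) : volume (Δ n) ≠ ∞ := by
    refine measure_ne_top_of_subset symmDiff_subset_union (measure_union_ne_top ?_ hfin)
    rwa [measure_preimage_add_right]
  have hbound := (happrox.const_mul 12).add hΔ
  rw [mul_zero, add_zero] at hbound
  refine squeeze_zero' (.of_forall fun _ => measureReal_nonneg) ?_ hbound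
  filter_upwards [happrox.eventually_lt_const one_half_pos] with n hn
  rw [measureReal_restrict_apply' measurableSet_Ico]
  have hsub : F n ∩ I ⊆ ({x | ¬ FarFromGrid (q n) |q n * α - p n| x} ∩ I) ∪ Δ n := by
    intro x hx
    by_cases hfar : FarFromGrid (q n) |q n * α - p n| x
    · have hxI : x + (q n * α - p n) ∈ I := hfar.add_mem_Ico (hq0 n) hx.2
      have hcross := hF n x hx hfar
      rw [mem_symmDiff, mem_preimage] at hcross
      exact .inr (hcross.imp (fun h => ⟨⟨h.1, hxI⟩, fun hD => h.2 hD.1⟩)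
        fun h => ⟨⟨h.1, hx.2⟩, fun hD => h.2 hD.1⟩)
    · exact .inl ⟨hfar, hx.2⟩
  refine (measureReal_mono hsub (measure_union_ne_top ?_ (hΔfin n))).trans
    ((measureReal_union_le _ _).trans ?_)
  · exact measure_ne_top_of_subset inter_subset_right measure_Ico_lt_top.ne
  · gcongr
    exact measureReal_not_farFromGrid_le (hq0 n) (abs_nonneg _) hn

theorem halfRigidAlong_towerMap (hodd : ∀ n, Odd (q n)) (hpq : ∀ n, (p n).Coprime (q n))
    (hq : Tendsto q atTop atTop)
    (happrox : Tendsto (fun n => q n * |q n * α - p n|) atTop (𝓝 0)) :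
    HalfRigidAlong (fun n => q n + q n / 2 + 1) (towerMap α)
      (volume.restrict (Ico 0 (3 / 2))) := by
  have hq0 (n : ℕ) : q n ≠ 0 := (hodd n).pos.ne'
  refine .of_equidistributed (measurable_towerMap α) (E := fun n => lateSet (q n))
    (fun n => measurableSet_lateSet (q n)) (fun C hC => ?_) (fun A hA => ?_) (fun A hA => ?_)
  · simp only [measureReal_restrict_apply' measurableSet_Ico, inter_right_comm C _ (Ico 0 (3 / 2))]
    exact tendsto_measureReal_inter_lateSet hq0 hq (hC.inter measurableSet_Ico)
      (measure_ne_top_of_subset inter_subset_right measure_Ico_lt_top.ne)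
  · refine tendsto_measureReal_of_subset_symmDiff_of_farFromGrid hq0 happrox hA ?_
    rintro n x ⟨⟨hx, hlate⟩, hxI⟩ hfar
    have hpow := hfar.towerMap_iterate (hodd n) (hpq n) hxI
    rw [show halfIndicator (q n * x) = 1 from hlate, Nat.sub_self, Function.iterate_zero_apply]
      at hpow
    rwa [mem_symmDiff, mem_preimage, hpow] at hx
  · refine tendsto_measureReal_of_subset_symmDiff_of_farFromGrid hq0 happrox
      (measurable_towerMap α hA) ?_
    rintro n x ⟨⟨hx, hlate⟩, hxI⟩ hfar
    have hpow := hfar.towerMap_iterate (hodd n) (hpq n) hxI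
    have hzero : halfIndicator (q n * x) = 0 :=
      (Nat.le_one_iff_eq_zero_or_eq_one.1 (halfIndicator_le_one _)).resolve_right hlate
    rw [hzero, Nat.sub_zero, Function.iterate_one] at hpow
    rwa [mem_symmDiff, mem_preimage, hpow] at hx

end WeakLimit

section LiouvilleRotation

open scoped Nat

lemma exists_coprime_partialSum_liouvilleNumber {m : ℕ} (hm : 0 < m) (n : ℕ) :
    ∃ p : ℕ, p.Coprime m ∧ LiouvilleNumber.partialSum m (n + 2) = p / (m : ℝ) ^ (n + 2)! := by
  obtain ⟨r, hr⟩ := LiouvilleNumber.partialSum_eq_rat hm (n + 1)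
  obtain ⟨k, hk⟩ := Nat.exists_eq_add_of_lt ((Nat.factorial_lt n.succ_pos).2 (n + 1).lt_succ_self)
  refine ⟨r * m ^ k * m + 1, by simp, ?_⟩
  have hm' : (m : ℝ) ≠ 0 := Nat.cast_ne_zero.2 hm.ne'
  push_cast at hr ⊢
  rw [LiouvilleNumber.partialSum_succ, hr, hk, pow_succ, pow_add]
  field_simp

lemma pow_factorial_mul_abs_sub_le {m : ℕ} (hm : 2 ≤ m) {p n : ℕ}
    (hp : LiouvilleNumber.partialSum m (n + 2) = p / (m : ℝ) ^ (n + 2)!) :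
    (m : ℝ) ^ (n + 2)! * |(m : ℝ) ^ (n + 2)! * liouvilleNumber m - p| ≤ (1 / m : ℝ) ^ n := by
  have hm1 : (1 : ℝ) < m := by exact_mod_cast hm
  have hrem := LiouvilleNumber.remainder_lt (m := m) (n + 2) (by exact_mod_cast hm)
  have hpos := LiouvilleNumber.remainder_pos hm1 (n + 2)
  have hsub : (m : ℝ) ^ (n + 2)! * liouvilleNumber m - p =
      (m : ℝ) ^ (n + 2)! * LiouvilleNumber.remainder m (n + 2) := by
    rw [← LiouvilleNumber.partialSum_add_remainder hm1 (n + 2), hp]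
    field_simp
    ring
  have hmQ : (m : ℝ) ≤ (m : ℝ) ^ (n + 2)! := le_self_pow₀ hm1.le (Nat.factorial_ne_zero _)
  rw [hsub, abs_of_pos (by positivity)]
  set Q := (m : ℝ) ^ (n + 2)!
  have hQ : 0 < Q := by positivity
  calc Q * (Q * LiouvilleNumber.remainder m (n + 2))
    _ ≤ Q * (Q * (1 / Q ^ (n + 2))) := by gcongr
    _ = (1 / Q) ^ n := by
      rw [one_div_pow, pow_add]
      field_simp
    _ ≤ (1 / m) ^ n := by gcongr

/-- The witness is the Liouville number `∑ 3 ^ (-i!)` with its partial sums `p n / q n`: their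
denominators are powers of `3`, hence odd, and the last summand makes the numerators congruent to
`1` modulo `3`. -/
theorem exists_irrational_odd_approximation : ∃ (α : ℝ) (q p : ℕ → ℕ), Irrational α ∧
    (∀ n, Odd (q n)) ∧ (∀ n, (p n).Coprime (q n)) ∧ Tendsto q atTop atTop ∧
    Tendsto (fun n => q n * |q n * α - p n|) atTop (𝓝 0) := by
  choose p hcoprime hp using exists_coprime_partialSum_liouvilleNumber (m := 3) (by norm_num)
  refine ⟨liouvilleNumber 3, fun n => 3 ^ (n + 2)!, p, ?_, fun n => .pow (by decide),
    fun n => (hcoprime n).pow_right _, ?_, ?_⟩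
  · exact_mod_cast (liouville_liouvilleNumber (m := 3) (by norm_num)).irrational
  · refine tendsto_atTop_mono (fun n => ?_) tendsto_id
    have hle : n ≤ (n + 2)! := (n.le_add_right 2).trans (Nat.self_le_factorial _)
    exact hle.trans (Nat.lt_pow_self (by norm_num)).le
  · have hgeom : Tendsto (fun n : ℕ => ((1 : ℝ) / (3 : ℕ)) ^ n) atTop (𝓝 0) :=
      tendsto_pow_atTop_nhds_zero_of_lt_one (by norm_num) (by norm_num)
    refine squeeze_zero (fun n => by positivity) (fun n => ?_) hgeom
    exact_mod_cast pow_factorial_mul_abs_sub_le (m := 3) (by norm_num) (hp n)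

end LiouvilleRotation

lemma preimage_preimage_of_leftInverse {X Y : Type*} {φ : X → Y} {ψ : Y → X}
    (hψφ : Function.LeftInverse ψ φ) (A : Set X) : φ ⁻¹' (ψ ⁻¹' A) = A := by
  rw [← preimage_comp, hψφ.comp_eq_id, preimage_id]

section Semiconj

variable {X Y : Type*} [MeasurableSpace X] [MeasurableSpace Y] {μ : Measure X} {ν : Measure Y}
  {φ : X → Y} {T : X → X} {S : Y → Y}

lemma measure_preimage_iterate_inter_of_semiconj (hφ : MeasurePreserving φ μ ν)
    (hφT : Function.Semiconj φ T S) (hS : Measurable S) {A B : Set Y} (hA : MeasurableSet A)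
    (hB : MeasurableSet B) (n : ℕ) :
    μ (T^[n] ⁻¹' (φ ⁻¹' A) ∩ φ ⁻¹' B) = ν (S^[n] ⁻¹' A ∩ B) := by
  rw [← hφ.measure_preimage ((hS.iterate n hA).inter hB).nullMeasurableSet, preimage_inter,
    ← preimage_comp, ← preimage_comp, (hφT.iterate_right n).comp_eq]

lemma StronglyMixing.of_semiconj (hT : StronglyMixing T μ) (hφ : MeasurePreserving φ μ ν)
    (hφT : Function.Semiconj φ T S) (hS : Measurable S) : StronglyMixing S ν := by
  intro A B hA hB
  have h := hT (φ ⁻¹' A) (φ ⁻¹' B) (hφ.measurable hA) (hφ.measurable hB)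
  simpa only [measure_preimage_iterate_inter_of_semiconj hφ hφT hS hA hB,
    hφ.measure_preimage hA.nullMeasurableSet, hφ.measure_preimage hB.nullMeasurableSet] using h

lemma WeaklyMixing.of_semiconj_of_leftInverse (hS : WeaklyMixing S ν)
    (hφ : MeasurePreserving φ μ ν) {ψ : Y → X} (hψ : Measurable ψ)
    (hψφ : Function.LeftInverse ψ φ) (hφT : Function.Semiconj φ T S) (hSm : Measurable S) :
    WeaklyMixing T μ := by
  intro A B hA hB
  have hmeasure {C : Set X} (hC : MeasurableSet C) : μ C = ν (ψ ⁻¹' C) := by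
    rw [← hφ.measure_preimage (hψ hC).nullMeasurableSet, preimage_preimage_of_leftInverse hψφ]
  have hinter (j : ℕ) : μ (T^[j] ⁻¹' A ∩ B) = ν (S^[j] ⁻¹' (ψ ⁻¹' A) ∩ ψ ⁻¹' B) := by
    rw [← measure_preimage_iterate_inter_of_semiconj hφ hφT hSm (hψ hA) (hψ hB),
      preimage_preimage_of_leftInverse hψφ, preimage_preimage_of_leftInverse hψφ]
  simpa only [measureReal_def, hmeasure hA, hmeasure hB, hinter] using hS _ _ (hψ hA) (hψ hB)

end Semiconj

section UnitInterval

/-- The normalized Lebesgue measure on the phase space `[0, 3/2)` of `towerMap`. -/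
noncomputable def towerMeasure : Measure ℝ :=
  ENNReal.ofReal (2 / 3) • volume.restrict (Ico (0 : ℝ) (3 / 2))

instance : IsProbabilityMeasure towerMeasure := by
  constructor
  rw [towerMeasure, Measure.smul_apply, Measure.restrict_apply_univ, Real.volume_Ico, smul_eq_mul,
    ← ENNReal.ofReal_mul (by norm_num)]
  norm_num

lemma towerMeasure_real_Ico_one : towerMeasure.real (Ico 1 (3 / 2)) = 1 / 3 := by
  rw [towerMeasure, measureReal_ennreal_smul_apply, ENNReal.toReal_ofReal (by norm_num),
    measureReal_restrict_apply measurableSet_Ico, inter_eq_left.2 (Ico_subset_Ico_left zero_le_one),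
    Real.volume_real_Ico_of_le (by norm_num)]
  norm_num

/-- The affine chart `[0, 1] → [0, 3/2]`. -/
noncomputable def chart (x : Icc (0 : ℝ) 1) : ℝ := 3 / 2 * x

/-- The inverse of `chart`, extended to a retraction `ℝ → [0, 1]`. -/
noncomputable def chartInv (y : ℝ) : Icc (0 : ℝ) 1 := projIcc 0 1 zero_le_one (2 / 3 * y)

lemma measurable_chartInv : Measurable chartInv :=
  (continuous_projIcc.comp (by fun_prop)).measurable

lemma leftInverse_chartInv_chart : Function.LeftInverse chartInv chart := fun x => by
  rw [chartInv, chart, ← mul_assoc, show (2 / 3 * (3 / 2) : ℝ) = 1 by norm_num, one_mul,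
    projIcc_val]

lemma chart_chartInv {y : ℝ} (hy : y ∈ Icc (0 : ℝ) (3 / 2)) : chart (chartInv y) = y := by
  rw [chart, chartInv, projIcc_of_mem zero_le_one ⟨by linarith [hy.1], by linarith [hy.2]⟩]
  ring

lemma chart_mem_Icc (x : Icc (0 : ℝ) 1) : chart x ∈ Icc (0 : ℝ) (3 / 2) :=
  ⟨by rw [chart]; linarith [x.2.1], by rw [chart]; linarith [x.2.2]⟩

lemma measurePreserving_chart : MeasurePreserving chart volume towerMeasure := by
  have hscale : MeasurePreserving (fun x : ℝ => 3 / 2 * x) volume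
      (ENNReal.ofReal (2 / 3) • volume) := by
    refine ⟨by fun_prop, ?_⟩
    rw [Real.map_volume_mul_left (by norm_num)]
    norm_num [abs_of_pos]
  have hrestrict := hscale.restrict_preimage (s := Icc (0 : ℝ) (3 / 2)) measurableSet_Icc
  have hpreimage : (fun x : ℝ => 3 / 2 * x) ⁻¹' Icc (0 : ℝ) (3 / 2) = Icc 0 1 := by
    rw [preimage_const_mul_Icc₀ _ _ (by norm_num)]
    norm_num
  rw [hpreimage, Measure.restrict_smul, ← restrict_Ico_eq_restrict_Icc (b := 3 / 2)] at hrestrict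
  exact hrestrict.comp (measurePreserving_subtype_coe measurableSet_Icc)

lemma measurePreserving_chartInv : MeasurePreserving chartInv towerMeasure volume := by
  rw [← measurePreserving_chart.map_eq]
  refine .map_of_comp ?_ measurable_chartInv measurePreserving_chart.measurable
  rw [leftInverse_chartInv_chart.comp_eq_id]
  exact .id volume

lemma ae_chart_mem_Ico : ∀ᵐ x, chart x ∈ Ico (0 : ℝ) (3 / 2) :=
  measurePreserving_chart.quasiMeasurePreserving.ae
    (Measure.ae_smul_measure (ae_restrict_mem measurableSet_Ico) _)

/-- The self-map of `[0, 1]` that is `f` read in the affine chart; it is meaningful when `f`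
preserves `[0, 3/2]`. -/
noncomputable def chartConj (f : ℝ → ℝ) (x : Icc (0 : ℝ) 1) : Icc (0 : ℝ) 1 :=
  chartInv (f (chart x))

lemma measurable_chartConj {f : ℝ → ℝ} (hf : Measurable f) : Measurable (chartConj f) :=
  measurable_chartInv.comp (hf.comp measurePreserving_chart.measurable)

lemma measurePreserving_chartConj {f : ℝ → ℝ}
    (hf : MeasurePreserving f towerMeasure towerMeasure) :
    MeasurePreserving (chartConj f) volume volume :=
  measurePreserving_chartInv.comp (hf.comp measurePreserving_chart)

lemma semiconj_chart_chartConj {f : ℝ → ℝ} (hf : MapsTo f (Icc 0 (3 / 2)) (Icc 0 (3 / 2))) :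
    Function.Semiconj chart (chartConj f) f :=
  fun x => chart_chartInv (hf (chart_mem_Icc x))

lemma chartConj_chartConj_of_eq {f g : ℝ → ℝ} (hf : MapsTo f (Icc 0 (3 / 2)) (Icc 0 (3 / 2)))
    {x : Icc (0 : ℝ) 1} (hgf : g (f (chart x)) = chart x) : chartConj g (chartConj f x) = x := by
  rw [chartConj, semiconj_chart_chartConj hf x, hgf, leftInverse_chartInv_chart x]

lemma weaklyMixing_chartConj {f : ℝ → ℝ} (hf : MapsTo f (Icc 0 (3 / 2)) (Icc 0 (3 / 2)))
    (hfm : Measurable f) (hmix : WeaklyMixing f towerMeasure) :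
    WeaklyMixing (chartConj f) volume :=
  hmix.of_semiconj_of_leftInverse measurePreserving_chart measurable_chartInv
    leftInverse_chartInv_chart (semiconj_chart_chartConj hf) hfm

lemma stronglyMixing_of_chartConj {f : ℝ → ℝ} (hf : MapsTo f (Icc 0 (3 / 2)) (Icc 0 (3 / 2)))
    (hfm : Measurable f) (hmix : StronglyMixing (chartConj f) volume) :
    StronglyMixing f towerMeasure :=
  hmix.of_semiconj measurePreserving_chart (semiconj_chart_chartConj hf) hfm

theorem exists_ergodic_halfRigidAlong_towerMap : ∃ (α : ℝ) (h : ℕ → ℕ),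
    Ergodic (towerMap α) towerMeasure ∧ Tendsto h atTop atTop ∧
      HalfRigidAlong h (towerMap α) towerMeasure := by
  obtain ⟨α, q, p, hα, hodd, hpq, hq, happrox⟩ := exists_irrational_odd_approximation
  exact ⟨α, fun n => q n + q n / 2 + 1, (ergodic_towerMap hα).smul_measure _,
    tendsto_atTop_mono (fun n => by omega) hq,
    (halfRigidAlong_towerMap hodd hpq hq happrox).smul_measure _⟩

end UnitInterval

/-- There is an invertible Lebesgue-measure-preserving map of `[0,1]` (Chacon's
transformation) which is weakly mixing but not strongly mixing. -/
theorem exists_weakly_mixing_not_strongly_mixing_interval :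
    ∃ T S : Set.Icc (0:ℝ) 1 → Set.Icc (0:ℝ) 1,
      Measurable T ∧ Measurable S ∧
      (∀ᵐ x ∂(volume : Measure (Set.Icc (0:ℝ) 1)), S (T x) = x) ∧
      (∀ᵐ x ∂(volume : Measure (Set.Icc (0:ℝ) 1)), T (S x) = x) ∧
      (∀ A : Set (Set.Icc (0:ℝ) 1), MeasurableSet A → volume (T ⁻¹' A) = volume A) ∧
      (∀ A B : Set (Set.Icc (0:ℝ) 1), MeasurableSet A → MeasurableSet B →
        Tendsto
          (fun n : ℕ => (1 / n : ℝ) *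
            ∑ j ∈ Finset.range n,
              ((volume (T^[j] ⁻¹' A ∩ B)).toReal -
                (volume A).toReal * (volume B).toReal) ^ 2)
          atTop (nhds 0)) ∧
      (∃ A B : Set (Set.Icc (0:ℝ) 1), MeasurableSet A ∧ MeasurableSet B ∧
        ¬ Tendsto (fun n : ℕ => volume (T^[n] ⁻¹' A ∩ B)) atTop
            (nhds (volume A * volume B))) := by
  obtain ⟨α, h, hergodic, hh, hrigid⟩ := exists_ergodic_halfRigidAlong_towerMap
  have hT := mapsTo_towerMap α
  have hS := mapsTo_towerInv α
  have hnotmixing : ¬ StronglyMixing (chartConj (towerMap α)) volume := fun hmix =>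
    hrigid.not_stronglyMixing hh (measurableSet_Ico (a := 1) (b := 3 / 2))
      (by norm_num [towerMeasure_real_Ico_one]) (by norm_num [towerMeasure_real_Ico_one])
      (stronglyMixing_of_chartConj hT hergodic.measurable hmix)
  exact ⟨chartConj (towerMap α), chartConj (towerInv α),
    measurable_chartConj (measurable_towerMap α), measurable_chartConj (measurable_towerInv α),
    ae_chart_mem_Ico.mono fun x hx => chartConj_chartConj_of_eq hT (towerInv_towerMap α hx),
    ae_chart_mem_Ico.mono fun x hx => chartConj_chartConj_of_eq hS (towerMap_towerInv α hx),
    fun A hA => (measurePreserving_chartConj hergodic.toMeasurePreserving).measure_preimage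
      hA.nullMeasurableSet,
    weaklyMixing_chartConj hT hergodic.measurable (hrigid.weaklyMixing hergodic),
    by simpa only [StronglyMixing, not_forall, exists_prop] using hnotmixing⟩
end

section
/- There exists an automorphism U of T² that is weakly mixing but not strongly mixing: for all Borel sets A, B ⊆ T², (1/n) ∑_{j=0}^{n−1} [μ(U^{−j}(A) ∩ B) − μ(A)μ(B)]² → 0 as n → ∞, yet there exist Borel sets A, B ⊆ T² for which μ(U^{−n}(A) ∩ B) does not converge to μ(A)μ(B). -/
/-!
A uniformly rigid map (some iterates tend uniformly to the identity) is never strongly mixing: two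
small disjoint balls do not meet at the return times. On the other hand, mixing along *some* filter
of times already forces weak mixing: along a sequence of mixing times `m₁, m₂, …`, chosen
inductively, the images of a centred indicator function are almost orthogonal, which bounds the
correlations `μ (U⁻ʲ A ∩ B) - μ A μ B` in quadratic mean.

Both properties are limits of countably many open conditions on `C(T2, T2)`, so by Baire's theorem
it suffices to make both dense in the closure of one set `P` (Anosov–Katok). Take for `P` the
conjugates of rational translations `R_α (x, y) = (x + α, y)` by measure-preserving homeomorphisms.
These are periodic, hence rigid. For mixing, let `q α = 0` and let `g` be the fast shear
`(x, y) ↦ (x + M y, y)` after the periodic shear `(x, y) ↦ (x, y + ‖q x‖)`; it commutes with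
`R_α`, so `H R_α H⁻¹ = (H g) R_α (H g)⁻¹` is the limit of `(H g) R_β (H g)⁻¹` as `β → α`. For
suitable `β` some iterate is `(H g) R_t (H g)⁻¹` with `q t = 1/2`, and these mix as `M → ∞`.
-/

open MeasureTheory Filter Set
open scoped ENNReal symmDiff

noncomputable section

instance fact01 : Fact ((0:ℝ) < 1) := ⟨one_pos⟩

/-- The two-dimensional torus `[0,1)²` with coordinatewise addition mod 1. -/
abbrev T2 : Type := AddCircle (1:ℝ) × AddCircle (1:ℝ)

/-- The canonical representative in `[0,1)` of a point of the circle. -/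
noncomputable def rep (x : AddCircle (1:ℝ)) : ℝ := ((AddCircle.equivIco 1 0) x : ℝ)

/-- The point of the torus with coordinates `a`, `b` (mod 1). -/
noncomputable def tv (a b : ℝ) : T2 := ((a : AddCircle (1:ℝ)), (b : AddCircle (1:ℝ)))

open Classical in
/-- The Chacon-type maps `U_n` on the torus. -/
noncomputable def chaconU : ℕ → T2 → T2
  | 0 => id
  | 1 => fun x =>
      if 0 ≤ rep x.1 ∧ rep x.1 < 1/2 ∧ 1/2 ≤ rep x.2 ∧ rep x.2 < 1 then x + tv (1/2) 0
      else if 1/2 ≤ rep x.1 ∧ rep x.1 < 1 ∧ 1/2 ≤ rep x.2 ∧ rep x.2 < 1 then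
        x + tv (-(1/2)) (-(1/2))
      else if 0 ≤ rep x.1 ∧ rep x.1 < 1/2 ∧ 0 ≤ rep x.2 ∧ rep x.2 < 1/2 then x + tv 0 (1/2)
      else x
  | (n+2) => fun x =>
      let s : ℝ := 1 / 2 ^ (n+2)
      let a := rep x.1
      let b := rep x.2
      if 1-4*s ≤ a ∧ a < 1-3*s ∧ s ≤ b ∧ b < 2*s then x + tv (5*s-1) (1-2*s)
      else if 1-3*s ≤ a ∧ a < 1-2*s ∧ s ≤ b ∧ b < 2*s then x + tv s 0
      else if 1-4*s ≤ a ∧ a < 1-3*s ∧ 0 ≤ b ∧ b < s then x + tv (3*s) s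
      else if 1-3*s ≤ a ∧ a < 1-2*s ∧ 0 ≤ b ∧ b < s then x + tv s 0
      else if 1-2*s ≤ a ∧ a < 1 ∧ s ≤ b ∧ b < 2*s then x + tv (2*s-1) (1-3*s)
      else if 1-2*s ≤ a ∧ a < 1-s ∧ 0 ≤ b ∧ b < s then x + tv (2*s-1) (1-s)
      else if 1-s ≤ a ∧ a < 1 ∧ 0 ≤ b ∧ b < s then x
      else chaconU (n+1) x

/-- An automorphism of the torus: measurable, bijective up to null sets with measurable
inverse, and measure-preserving. -/
def IsAutomorphism (U : T2 → T2) : Prop :=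
  Measurable U ∧ ∃ V : T2 → T2, Measurable V ∧
    (∀ᵐ x ∂(volume : Measure T2), V (U x) = x) ∧
    (∀ᵐ x ∂(volume : Measure T2), U (V x) = x) ∧
    ∀ A : Set T2, MeasurableSet A → volume (U ⁻¹' A) = volume A

/-! ### Almost orthogonal vectors and stationary sequences -/

section InnerProductSpace

variable {𝕜 E ι : Type*} [RCLike 𝕜] [NormedAddCommGroup E] [InnerProductSpace 𝕜 E]

lemma norm_sum_smul_sq_le {s : Finset ι} {v : ι → E} {C δ : ℝ} (hC : ∀ i ∈ s, ‖v i‖ ≤ C)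
    (hδ : 0 ≤ δ) (hv : ∀ i ∈ s, ∀ j ∈ s, i ≠ j → ‖inner 𝕜 (v i) (v j)‖ ≤ δ) (c : ι → 𝕜) :
    ‖∑ i ∈ s, c i • v i‖ ^ 2 ≤ (C ^ 2 + s.card * δ) * ∑ i ∈ s, ‖c i‖ ^ 2 := by
  classical
  have inner_le : ∀ i ∈ s, ∀ j ∈ s,
      ‖inner 𝕜 (c i • v i) (c j • v j)‖ ≤ ‖c i‖ * ‖c j‖ * ((if i = j then C ^ 2 else 0) + δ) := by
    intro i hi j hj
    rw [inner_smul_left, inner_smul_right, norm_mul, norm_mul, RCLike.norm_conj, ← mul_assoc]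
    gcongr
    split_ifs with hij
    · rw [← hij, inner_self_eq_norm_sq_to_K, norm_pow, RCLike.norm_ofReal, abs_norm]
      exact (pow_le_pow_left₀ (norm_nonneg _) (hC i hi) 2).trans (le_add_of_nonneg_right hδ)
    · simpa only [zero_add] using hv i hi j hj hij
  calc ‖∑ i ∈ s, c i • v i‖ ^ 2 = ‖∑ i ∈ s, ∑ j ∈ s, inner 𝕜 (c i • v i) (c j • v j)‖ := by
        simp only [← inner_sum, ← sum_inner, inner_self_eq_norm_sq_to_K, norm_pow,
          RCLike.norm_ofReal, abs_norm]
    _ ≤ ∑ i ∈ s, ∑ j ∈ s, ‖c i‖ * ‖c j‖ * ((if i = j then C ^ 2 else 0) + δ) :=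
        (norm_sum_le _ _).trans <| Finset.sum_le_sum fun i hi =>
          (norm_sum_le _ _).trans <| Finset.sum_le_sum fun j hj => inner_le i hi j hj
    _ = C ^ 2 * ∑ i ∈ s, ‖c i‖ ^ 2 + δ * (∑ i ∈ s, ‖c i‖) ^ 2 := by
        simp only [mul_add, Finset.sum_add_distrib, mul_ite, mul_zero, Finset.sum_ite_eq,
          Finset.sum_ite_mem, Finset.inter_self, ← sq, ← Finset.sum_mul, ← Finset.mul_sum]
        ring
    _ ≤ C ^ 2 * ∑ i ∈ s, ‖c i‖ ^ 2 + δ * (s.card * ∑ i ∈ s, ‖c i‖ ^ 2) := by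
        gcongr
        exact sq_sum_le_card_mul_sum_sq
    _ = (C ^ 2 + s.card * δ) * ∑ i ∈ s, ‖c i‖ ^ 2 := by ring

lemma sum_norm_inner_sq_le {s : Finset ι} {v : ι → E} {C δ : ℝ} (hC : ∀ i ∈ s, ‖v i‖ ≤ C)
    (hδ : 0 ≤ δ) (hv : ∀ i ∈ s, ∀ j ∈ s, i ≠ j → ‖inner 𝕜 (v i) (v j)‖ ≤ δ) (g : E) :
    ∑ i ∈ s, ‖inner 𝕜 (v i) g‖ ^ 2 ≤ (C ^ 2 + s.card * δ) * ‖g‖ ^ 2 := by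
  set S : ℝ := ∑ i ∈ s, ‖inner 𝕜 (v i) g‖ ^ 2
  set w : E := ∑ i ∈ s, inner 𝕜 (v i) g • v i
  rcases (show 0 ≤ S by positivity).eq_or_lt with hS | hS
  · rw [← hS]
    positivity
  have inner_eq : inner 𝕜 w g = (S : 𝕜) := by
    simp only [w, S, sum_inner, inner_smul_left, RCLike.conj_mul, RCLike.ofReal_sum,
      RCLike.ofReal_pow]
  have S_le : S ≤ ‖w‖ * ‖g‖ := by
    simpa only [inner_eq, RCLike.norm_ofReal, abs_of_pos hS] using
      norm_inner_le_norm (𝕜 := 𝕜) w g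
  refine le_of_mul_le_mul_left ?_ hS
  calc S * S ≤ (‖w‖ * ‖g‖) * (‖w‖ * ‖g‖) := by gcongr
    _ = ‖w‖ ^ 2 * ‖g‖ ^ 2 := by ring
    _ ≤ (C ^ 2 + s.card * δ) * S * ‖g‖ ^ 2 := by
        gcongr
        exact norm_sum_smul_sq_le hC hδ hv _
    _ = S * ((C ^ 2 + s.card * δ) * ‖g‖ ^ 2) := by ring

end InnerProductSpace

lemma sum_range_le_sum_range_add {a : ℕ → ℝ} {B : ℝ} (ha : ∀ j, 0 ≤ a j) (haB : ∀ j, a j ≤ B)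
    (N m : ℕ) :
    ∑ j ∈ Finset.range N, a j ≤ ∑ j ∈ Finset.range N, a (j + m) + m * B :=
  calc ∑ j ∈ Finset.range N, a j ≤ ∑ j ∈ Finset.range (m + N), a j :=
        Finset.sum_le_sum_of_subset_of_nonneg (Finset.range_mono (Nat.le_add_left N m))
          fun _ _ _ => ha _
    _ = ∑ j ∈ Finset.range m, a j + ∑ j ∈ Finset.range N, a (m + j) := Finset.sum_range_add _ _ _
    _ ≤ m * B + ∑ j ∈ Finset.range N, a (m + j) := by
        gcongr
        simpa using Finset.sum_le_card_nsmul (Finset.range m) a B fun j _ => haB j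
    _ = ∑ j ∈ Finset.range N, a (j + m) + m * B := by simp only [add_comm]

lemma tendsto_cesaro_zero_of_mul_sum_le {a : ℕ → ℝ} {D : ℝ} (ha : ∀ j, 0 ≤ a j)
    (h : ∀ L : ℕ, ∃ R : ℝ, ∀ N : ℕ, L * ∑ j ∈ Finset.range N, a j ≤ N * D + R) :
    Tendsto (fun N : ℕ => (1 / N : ℝ) * ∑ j ∈ Finset.range N, a j) atTop (nhds 0) := by
  have cesaro_nonneg : ∀ N : ℕ, 0 ≤ (1 / N : ℝ) * ∑ j ∈ Finset.range N, a j := fun N =>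
    mul_nonneg (by positivity) (Finset.sum_nonneg fun j _ => ha j)
  refine tendsto_order.2 ⟨fun ε hε => .of_forall fun N => hε.trans_le (cesaro_nonneg N),
    fun ε hε => ?_⟩
  obtain ⟨L, hL⟩ := exists_nat_gt (max (D / ε) 0)
  have L_pos : (0 : ℝ) < L := (le_max_right _ _).trans_lt hL
  have D_lt : D < L * ε := (div_lt_iff₀ hε).1 ((le_max_left _ _).trans_lt hL)
  obtain ⟨R, hR⟩ := h L
  have mean_lt : ∀ᶠ N : ℕ in atTop, D + R / N < L * ε := by
    refine Tendsto.eventually_lt_const D_lt ?_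
    simpa using (tendsto_const_div_atTop_nhds_zero_nat R).const_add D
  filter_upwards [mean_lt, eventually_gt_atTop 0] with N hN N_pos
  replace N_pos : (0 : ℝ) < N := Nat.cast_pos.2 N_pos
  refine lt_of_mul_lt_mul_left ?_ L_pos.le
  calc L * ((1 / N : ℝ) * ∑ j ∈ Finset.range N, a j)
      = (1 / N : ℝ) * (L * ∑ j ∈ Finset.range N, a j) := by ring
    _ ≤ (1 / N : ℝ) * (N * D + R) := by gcongr; exact hR N
    _ = D + R / N := by field_simp
    _ < L * ε := hN

section Stationary

variable {𝕜 E : Type*} [RCLike 𝕜] [NormedAddCommGroup E] [InnerProductSpace 𝕜 E]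

lemma exists_seq_norm_inner_le {v : ℕ → E} {l : Filter ℕ} [l.NeBot]
    (hl : ∀ m, Tendsto (fun n => inner 𝕜 (v m) (v n)) l (nhds 0)) {δ : ℝ} (hδ : 0 < δ) :
    ∃ m : ℕ → ℕ, ∀ i j, i ≠ j → ‖inner 𝕜 (v (m i)) (v (m j))‖ ≤ δ := by
  have : Std.Symm fun x y => ‖inner 𝕜 (v x) (v y)‖ ≤ δ :=
    ⟨fun x y h => by rwa [norm_inner_symm]⟩
  obtain ⟨m, -, hm⟩ := exists_seq_of_forall_finset_exists' (fun _ : ℕ => True)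
    (fun x y => ‖inner 𝕜 (v x) (v y)‖ ≤ δ) fun s _ => by
      have : ∀ᶠ n in l, ∀ x ∈ s, ‖inner 𝕜 (v x) (v n)‖ ≤ δ := by
        refine (Finset.eventually_all s).2 fun x _ => ?_
        exact (tendsto_zero_iff_norm_tendsto_zero.1 (hl x)).eventually_le_const hδ
      obtain ⟨n, hn⟩ := this.exists
      exact ⟨n, trivial, hn⟩
  exact ⟨m, fun i j hij => hm hij⟩

lemma tendsto_cesaro_norm_inner_sq {v : ℕ → E} {l : Filter ℕ} [l.NeBot]
    (hv : ∀ j m n, inner 𝕜 (v (j + m)) (v (j + n)) = inner 𝕜 (v m) (v n))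
    (hl : ∀ m, Tendsto (fun n => inner 𝕜 (v m) (v n)) l (nhds 0)) (g : E) :
    Tendsto (fun N : ℕ => (1 / N : ℝ) * ∑ j ∈ Finset.range N, ‖inner 𝕜 (v j) g‖ ^ 2)
      atTop (nhds 0) := by
  have norm_v : ∀ j, ‖v j‖ = ‖v 0‖ := fun j => by
    simp only [@norm_eq_sqrt_re_inner 𝕜, ← hv j 0 0, add_zero]
  set a : ℕ → ℝ := fun j => ‖inner 𝕜 (v j) g‖ ^ 2
  set B : ℝ := (‖v 0‖ * ‖g‖) ^ 2
  have a_le : ∀ j, a j ≤ B := fun j =>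
    pow_le_pow_left₀ (norm_nonneg _) (norm_v j ▸ norm_inner_le_norm (v j) g) 2
  refine tendsto_cesaro_zero_of_mul_sum_le (D := (‖v 0‖ ^ 2 + 1) * ‖g‖ ^ 2)
    (fun j => sq_nonneg _) fun L => ?_
  rcases L.eq_zero_or_pos with rfl | L_pos
  · exact ⟨0, fun N => by simp only [Nat.cast_zero, zero_mul]; positivity⟩
  replace L_pos : (0 : ℝ) < L := Nat.cast_pos.2 L_pos
  obtain ⟨m, hm⟩ := exists_seq_norm_inner_le hl (one_div_pos.2 L_pos)
  have bessel : ∀ j, ∑ i ∈ Finset.range L, a (j + m i) ≤ (‖v 0‖ ^ 2 + 1) * ‖g‖ ^ 2 := fun j => by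
    have := sum_norm_inner_sq_le (𝕜 := 𝕜) (s := Finset.range L) (v := fun i => v (j + m i))
      (fun _ _ => (norm_v _).le) (one_div_pos.2 L_pos).le
      (fun i _ i' _ hi => by simpa only [hv] using hm i i' hi) g
    rwa [Finset.card_range, mul_one_div_cancel L_pos.ne'] at this
  refine ⟨∑ i ∈ Finset.range L, m i * B, fun N => ?_⟩
  calc L * ∑ j ∈ Finset.range N, a j = ∑ _i ∈ Finset.range L, ∑ j ∈ Finset.range N, a j := by
        simp
    _ ≤ ∑ i ∈ Finset.range L, (∑ j ∈ Finset.range N, a (j + m i) + m i * B) :=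
        Finset.sum_le_sum fun i _ =>
          sum_range_le_sum_range_add (fun _ => sq_nonneg _) a_le N (m i)
    _ = ∑ j ∈ Finset.range N, ∑ i ∈ Finset.range L, a (j + m i)
          + ∑ i ∈ Finset.range L, m i * B := by rw [Finset.sum_add_distrib, Finset.sum_comm]
    _ ≤ N * ((‖v 0‖ ^ 2 + 1) * ‖g‖ ^ 2) + ∑ i ∈ Finset.range L, m i * B := by
        gcongr
        simpa using Finset.sum_le_card_nsmul (Finset.range N) _ _ fun j _ => bessel j

end Stationary

/-! ### Correlations and mixing along a filter -/

/-- The covariance (without complex conjugation) of two complex-valued observables. -/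
def correlation {X : Type*} [MeasurableSpace X] (μ : Measure X) (f g : X → ℂ) : ℂ :=
  ∫ x, f x * g x ∂μ - (∫ x, f x ∂μ) * ∫ x, g x ∂μ

/-- The maps `W i` mix along `l`: bounded observables become asymptotically uncorrelated. Strong
mixing of `T` is the case `W n = T^[n]`, `l = atTop`. -/
def MixingAlong {X ι : Type*} [MeasurableSpace X] (μ : Measure X) (l : Filter ι)
    (W : ι → X → X) : Prop :=
  ∀ ⦃f g : X → ℂ⦄, Measurable f → Measurable g → (∃ C, ∀ x, ‖f x‖ ≤ C) → (∃ C, ∀ x, ‖g x‖ ≤ C) →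
    Tendsto (fun i => correlation μ (f ∘ W i) g) l (nhds 0)

section Correlation

variable {X Y : Type*} [MeasurableSpace X] [MeasurableSpace Y] {μ : Measure X} {ν : Measure Y}
  {f f₁ f₂ g : X → ℂ} {C : ℝ}

lemma correlation_comm (f g : X → ℂ) : correlation μ f g = correlation μ g f := by
  simp only [correlation, mul_comm]

lemma correlation_zero_left (g : X → ℂ) : correlation μ 0 g = 0 := by
  simp [correlation]

lemma correlation_smul_left (c : ℂ) (f g : X → ℂ) :
    correlation μ (c • f) g = c * correlation μ f g := by
  simp only [correlation, Pi.smul_apply, smul_eq_mul, mul_assoc, integral_const_mul, mul_sub]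

lemma correlation_add_left (h₁ : Integrable f₁ μ) (h₂ : Integrable f₂ μ)
    (hg : AEStronglyMeasurable g μ) (hC : ∀ x, ‖g x‖ ≤ C) :
    correlation μ (f₁ + f₂) g = correlation μ f₁ g + correlation μ f₂ g := by
  simp only [correlation, Pi.add_apply, add_mul]
  rw [integral_add h₁ h₂, integral_add (h₁.mul_bdd hg (ae_of_all μ hC))
    (h₂.mul_bdd hg (ae_of_all μ hC))]
  ring

lemma norm_correlation_le [IsProbabilityMeasure μ] (hf : Integrable f μ) (hC : ∀ x, ‖g x‖ ≤ C) :
    ‖correlation μ f g‖ ≤ 2 * C * ∫ x, ‖f x‖ ∂μ := by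
  have prod_le : ‖∫ x, f x * g x ∂μ‖ ≤ ∫ x, ‖f x‖ * C ∂μ :=
    norm_integral_le_of_norm_le (hf.norm.mul_const C) <| ae_of_all μ fun x => by
      rw [norm_mul]
      gcongr
      exact hC x
  have g_le : ‖∫ x, g x ∂μ‖ ≤ C := by
    simpa using norm_integral_le_of_norm_le_const (ae_of_all μ hC)
  calc ‖correlation μ f g‖ ≤ ‖∫ x, f x * g x ∂μ‖ + ‖∫ x, f x ∂μ‖ * ‖∫ x, g x ∂μ‖ :=
        (norm_sub_le _ _).trans_eq (by rw [norm_mul])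
    _ ≤ ∫ x, ‖f x‖ * C ∂μ + (∫ x, ‖f x‖ ∂μ) * C := by
        gcongr
        exact norm_integral_le_integral_norm f
    _ = 2 * C * ∫ x, ‖f x‖ ∂μ := by rw [integral_mul_const]; ring

lemma norm_correlation_comp_sub_le [IsProbabilityMeasure μ] {V : X → X}
    (hV : MeasurePreserving V μ μ) (h₁ : Integrable f₁ μ) (h₂ : Integrable f₂ μ)
    (hg : AEStronglyMeasurable g μ) (hC : ∀ x, ‖g x‖ ≤ C) :
    ‖correlation μ (f₁ ∘ V) g - correlation μ (f₂ ∘ V) g‖ ≤ 2 * C * ∫ x, ‖f₁ x - f₂ x‖ ∂μ := by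
  have sub_int : Integrable ((f₁ - f₂) ∘ V) μ := hV.integrable_comp_of_integrable (h₁.sub h₂)
  have add_eq : f₁ ∘ V = (f₁ - f₂) ∘ V + f₂ ∘ V := by
    ext x
    simp
  have norm_meas : AEStronglyMeasurable (fun x => ‖f₁ x - f₂ x‖) (μ.map V) :=
    hV.map_eq.symm ▸ (h₁.sub h₂).norm.aestronglyMeasurable
  have integral_eq : ∫ x, ‖((f₁ - f₂) ∘ V) x‖ ∂μ = ∫ x, ‖f₁ x - f₂ x‖ ∂μ :=
    (integral_map hV.aemeasurable norm_meas).symm.trans (by rw [hV.map_eq])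
  rw [add_eq, correlation_add_left sub_int (hV.integrable_comp_of_integrable h₂) hg hC,
    add_sub_cancel_right, ← integral_eq]
  exact norm_correlation_le sub_int hC

lemma correlation_comp_measurableEquiv {H : X ≃ᵐ Y} (hH : MeasurePreserving H μ ν) (f g : Y → ℂ) :
    correlation μ (f ∘ H) (g ∘ H) = correlation ν f g := by
  simp only [correlation, Function.comp_apply, hH.integral_comp' (fun y => f y * g y),
    hH.integral_comp' f, hH.integral_comp' g]

lemma correlation_indicator_one {A B : Set X} (hA : MeasurableSet A) (hB : MeasurableSet B) :
    correlation μ (A.indicator 1) (B.indicator 1) =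
      ((μ.real (A ∩ B) - μ.real A * μ.real B : ℝ) : ℂ) := by
  have mul_eq : ∀ x, A.indicator (1 : X → ℂ) x * B.indicator (1 : X → ℂ) x =
      (A ∩ B).indicator 1 x := fun x => by rw [inter_indicator_one]; rfl
  have integral_eq : ∀ {S : Set X}, MeasurableSet S →
      ∫ x, S.indicator (1 : X → ℂ) x ∂μ = μ.real S := fun hS => by
    simp [integral_indicator hS]
  rw [correlation, integral_eq hA, integral_eq hB]
  simp only [mul_eq, integral_eq (hA.inter hB), Complex.ofReal_sub, Complex.ofReal_mul]

end Correlation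

section MixingAlong

variable {X Y ι : Type*} [MeasurableSpace X] [MeasurableSpace Y] {μ : Measure X} {ν : Measure Y}
  {l : Filter ι} {W : ι → X → X}

lemma MixingAlong.conj (hW : MixingAlong μ l W) {H : X ≃ᵐ Y} (hH : MeasurePreserving H μ ν) :
    MixingAlong ν l fun i => H ∘ W i ∘ H.symm := by
  rintro f g hf hg ⟨C, hC⟩ ⟨D, hD⟩
  refine (hW (hf.comp H.measurable) (hg.comp H.measurable) ⟨C, fun x => hC _⟩
    ⟨D, fun x => hD _⟩).congr fun i => ?_
  rw [← correlation_comp_measurableEquiv hH]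
  congr 1
  ext x
  simp

lemma MixingAlong.tendsto_measureReal_inter (hW : MixingAlong μ l W)
    (hm : ∀ i, MeasurePreserving (W i) μ μ) {A B : Set X} (hA : MeasurableSet A)
    (hB : MeasurableSet B) :
    Tendsto (fun i => μ.real (W i ⁻¹' A ∩ B) - μ.real A * μ.real B) l (nhds 0) := by
  have indicator_bdd : ∀ S : Set X, ∃ C : ℝ, ∀ x, ‖S.indicator (1 : X → ℂ) x‖ ≤ C := fun S =>
    ⟨1, fun x => (norm_indicator_le_norm_self _ x).trans (by simp)⟩
  have correlation_eq : ∀ i, correlation μ (A.indicator 1 ∘ W i) (B.indicator 1) =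
      ((μ.real (W i ⁻¹' A ∩ B) - μ.real A * μ.real B : ℝ) : ℂ) := fun i => by
    rw [← (hm i).measureReal_preimage hA.nullMeasurableSet,
      ← correlation_indicator_one ((hm i).measurable hA) hB]
    rfl
  have := hW (measurable_one.indicator hA) (measurable_one.indicator hB) (indicator_bdd A)
    (indicator_bdd B)
  simp only [correlation_eq] at this
  exact_mod_cast (Complex.continuous_re.tendsto 0).comp this

lemma MixingAlong.eventually_norm_correlation_lt [TopologicalSpace X] [CompactSpace X]
    [OpensMeasurableSpace X] (hW : MixingAlong μ l W) {s : Set C(X, ℂ)} (hs : s.Finite) {ε : ℝ}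
    (hε : 0 < ε) : ∀ᶠ i in l, ∀ F ∈ s, ∀ G ∈ s, ‖correlation μ (F ∘ W i) G‖ < ε := by
  refine (eventually_all_finite hs).2 fun F _ => (eventually_all_finite hs).2 fun G _ => ?_
  have := hW F.continuous.measurable G.continuous.measurable
    ⟨_, F.norm_coe_le_norm⟩ ⟨_, G.norm_coe_le_norm⟩
  exact this.norm.eventually_lt_const (by simpa using hε)

end MixingAlong

section WeakMixing

variable {X : Type*} [MeasurableSpace X] {μ : Measure X} [IsProbabilityMeasure μ]

/-- The class of `1_A - μ A` in `L²`. -/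
def centeredIndicator (μ : Measure X) [IsProbabilityMeasure μ] {A : Set X}
    (hA : MeasurableSet A) : Lp ℝ 2 μ :=
  indicatorConstLp 2 hA (measure_ne_top μ A) 1 -
    μ.real A • indicatorConstLp 2 MeasurableSet.univ (measure_ne_top μ univ) 1

lemma inner_centeredIndicator {A B : Set X} (hA : MeasurableSet A) (hB : MeasurableSet B) :
    inner ℝ (centeredIndicator μ hA) (centeredIndicator μ hB) =
      μ.real (A ∩ B) - μ.real A * μ.real B := by
  simp only [centeredIndicator, inner_sub_left, inner_sub_right, inner_smul_left,
    inner_smul_right, L2.inner_indicatorConstLp_indicatorConstLp]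
  simp

theorem MixingAlong.tendsto_cesaro_sq {T : X → X} (hT : MeasurePreserving T μ μ) {l : Filter ℕ}
    [l.NeBot] (hl : MixingAlong μ l fun n => T^[n]) {A B : Set X} (hA : MeasurableSet A)
    (hB : MeasurableSet B) :
    Tendsto (fun N : ℕ => (1 / N : ℝ) * ∑ j ∈ Finset.range N,
      (μ.real (T^[j] ⁻¹' A ∩ B) - μ.real A * μ.real B) ^ 2) atTop (nhds 0) := by
  have measureReal_preimage : ∀ j {S : Set X}, MeasurableSet S → μ.real (T^[j] ⁻¹' S) = μ.real S :=
    fun j _ hS => (hT.iterate j).measureReal_preimage hS.nullMeasurableSet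
  have hTA : ∀ j, MeasurableSet (T^[j] ⁻¹' A) := fun j => (hT.iterate j).measurable hA
  have inner_eq : ∀ j {S : Set X} (hS : MeasurableSet S),
      inner ℝ (centeredIndicator μ (hTA j)) (centeredIndicator μ hS) =
        μ.real (T^[j] ⁻¹' A ∩ S) - μ.real A * μ.real S := fun j S hS => by
    rw [inner_centeredIndicator, measureReal_preimage j hA]
  refine (tendsto_cesaro_norm_inner_sq (𝕜 := ℝ) (v := fun j => centeredIndicator μ (hTA j))
    (l := l) (fun j m n => ?_) (fun m => ?_) (centeredIndicator μ hB)).congr fun N => ?_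
  · rw [inner_eq, inner_eq, measureReal_preimage _ hA, measureReal_preimage _ hA,
      add_comm j m, add_comm j n, Function.iterate_add, Function.iterate_add, preimage_comp,
      preimage_comp, ← preimage_inter, measureReal_preimage j ((hTA m).inter (hTA n))]
  · refine (hl.tendsto_measureReal_inter hT.iterate hA (hTA m)).congr fun n => ?_
    rw [real_inner_comm, inner_eq]
  · simp only [inner_eq, Real.norm_eq_abs, sq_abs]

end WeakMixing

section DenseSpan

lemma integrable_continuousMap {X : Type*} [TopologicalSpace X] [CompactSpace X]
    [MeasurableSpace X] [BorelSpace X] {μ : Measure X} [IsFiniteMeasure μ] (F : C(X, ℂ)) :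
    Integrable F μ :=
  (BoundedContinuousFunction.mkOfCompact F).integrable μ

variable {X ι : Type*} [TopologicalSpace X] [CompactSpace X] [MeasurableSpace X] [BorelSpace X]
  {μ : Measure X} [IsProbabilityMeasure μ] {S : Set C(X, ℂ)} {l : Filter ι} {V W : ι → X → X}

lemma exists_mem_span_integral_norm_sub_lt [NormalSpace X] [μ.WeaklyRegular]
    (hS : (Submodule.span ℂ S).topologicalClosure = ⊤) {f : X → ℂ} (hf : Integrable f μ) {ε : ℝ}
    (hε : 0 < ε) : ∃ F ∈ Submodule.span ℂ S, ∫ x, ‖f x - F x‖ ∂μ < ε := by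
  obtain ⟨G, hG, G_int⟩ := hf.exists_boundedContinuous_integral_sub_le (half_pos hε)
  have G_mem : G.toContinuousMap ∈ (Submodule.span ℂ S).topologicalClosure := by simp [hS]
  obtain ⟨F, hF, dist_lt⟩ := Metric.mem_closure_iff.1 G_mem (ε / 2) (half_pos hε)
  have F_int : Integrable F μ := integrable_continuousMap F
  have integral_lt : ∫ x, ‖G x - F x‖ ∂μ < ε / 2 := by
    refine (integral_mono_of_nonneg (ae_of_all μ fun x => norm_nonneg _) (integrable_const _)
      (ae_of_all μ fun x => ?_)).trans_lt (by simpa using dist_lt)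
    exact (dist_eq_norm _ _).symm.trans_le
      (ContinuousMap.dist_apply_le_dist (f := G.toContinuousMap) x)
  refine ⟨F, hF, ?_⟩
  calc ∫ x, ‖f x - F x‖ ∂μ ≤ ∫ x, (‖f x - G x‖ + ‖G x - F x‖) ∂μ :=
        integral_mono (hf.sub F_int).norm ((hf.sub G_int).norm.add (G_int.sub F_int).norm)
          fun x => norm_sub_le_norm_sub_add_norm_sub _ _ _
    _ = ∫ x, ‖f x - G x‖ ∂μ + ∫ x, ‖G x - F x‖ ∂μ :=
        integral_add (hf.sub G_int).norm (G_int.sub F_int).norm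
    _ < ε := by linarith

lemma tendsto_correlation_of_mem_span (hV : ∀ i, MeasurePreserving (V i) μ μ) {h : ι → X → ℂ}
    {C : ℝ} (hm : ∀ i, Measurable (h i)) (hC : ∀ i x, ‖h i x‖ ≤ C)
    (hl : ∀ F ∈ S, Tendsto (fun i => correlation μ (F ∘ V i) (h i)) l (nhds 0)) {F : C(X, ℂ)}
    (hF : F ∈ Submodule.span ℂ S) :
    Tendsto (fun i => correlation μ (F ∘ V i) (h i)) l (nhds 0) := by
  have comp_int : ∀ (F : C(X, ℂ)) i, Integrable (F ∘ V i) μ := fun F i =>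
    (hV i).integrable_comp_of_integrable (integrable_continuousMap F)
  induction hF using Submodule.span_induction with
  | mem F hF => exact hl F hF
  | zero => exact tendsto_const_nhds.congr fun i => (correlation_zero_left (h i)).symm
  | add F G _ _ hF hG =>
    rw [← add_zero (0 : ℂ)]
    exact (hF.add hG).congr fun i => (correlation_add_left (comp_int F i) (comp_int G i)
      (hm i).aestronglyMeasurable (hC i)).symm
  | smul c F _ hF =>
    rw [← mul_zero c]
    exact (hF.const_mul c).congr fun i => (correlation_smul_left c (F ∘ V i) (h i)).symm

variable [NormalSpace X] [μ.WeaklyRegular]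

lemma tendsto_correlation_of_dense_span (hS : (Submodule.span ℂ S).topologicalClosure = ⊤)
    (hV : ∀ i, MeasurePreserving (V i) μ μ) {h : ι → X → ℂ} {C : ℝ} (hm : ∀ i, Measurable (h i))
    (hC : ∀ i x, ‖h i x‖ ≤ C)
    (hl : ∀ F ∈ S, Tendsto (fun i => correlation μ (F ∘ V i) (h i)) l (nhds 0)) {f : X → ℂ}
    (hf : Integrable f μ) : Tendsto (fun i => correlation μ (f ∘ V i) (h i)) l (nhds 0) := by
  refine Metric.tendsto_nhds.2 fun ε hε => ?_
  obtain ⟨F, hF, integral_lt⟩ := exists_mem_span_integral_norm_sub_lt hS hf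
    (ε := ε / 2 / (2 * (|C| + 1))) (by positivity)
  filter_upwards [Metric.tendsto_nhds.1 (tendsto_correlation_of_mem_span hV hm hC hl hF) (ε / 2)
    (half_pos hε)] with i hi
  rw [dist_zero_right] at hi ⊢
  have sub_lt : ‖correlation μ (f ∘ V i) (h i) - correlation μ (F ∘ V i) (h i)‖ < ε / 2 := by
    rw [lt_div_iff₀' (by positivity)] at integral_lt
    refine (norm_correlation_comp_sub_le (hV i) hf (integrable_continuousMap F)
      (hm i).aestronglyMeasurable fun x => ?_).trans_lt integral_lt
    exact (hC i x).trans (by linarith [le_abs_self C])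
  linarith [norm_le_norm_add_norm_sub' (correlation μ (f ∘ V i) (h i))
    (correlation μ (F ∘ V i) (h i))]

theorem mixingAlong_of_dense_span (hS : (Submodule.span ℂ S).topologicalClosure = ⊤)
    (hW : ∀ i, MeasurePreserving (W i) μ μ)
    (hl : ∀ F ∈ S, ∀ G ∈ S, Tendsto (fun i => correlation μ (F ∘ W i) G) l (nhds 0)) :
    MixingAlong μ l W := by
  rintro f g hf hg ⟨C, hC⟩ ⟨D, hD⟩
  have integrable_bdd {k : X → ℂ} {K : ℝ} (hk : Measurable k) (hK : ∀ x, ‖k x‖ ≤ K) :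
      Integrable k μ := .of_bound hk.aestronglyMeasurable K (ae_of_all μ hK)
  have tendsto_left : ∀ G ∈ S, Tendsto (fun i => correlation μ (f ∘ W i) G) l (nhds 0) :=
    fun G hG => tendsto_correlation_of_dense_span hS hW (fun _ => G.continuous.measurable)
      (fun _ => G.norm_coe_le_norm) (fun F hF => hl F hF G hG) (integrable_bdd hf hC)
  simp only [correlation_comm _ g]
  refine tendsto_correlation_of_dense_span hS (V := fun _ => id) (fun _ => .id μ)
    (fun i => hf.comp (hW i).measurable) (fun i x => hC (W i x)) (fun G hG => ?_)
    (integrable_bdd hg hD)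
  simpa only [Function.comp_id, correlation_comm _ (f ∘ _)] using tendsto_left G hG

lemma span_precomp_homeomorph_closure_eq_top {X Y : Type*} [TopologicalSpace X]
    [TopologicalSpace Y] {S : Set C(Y, ℂ)} (hS : (Submodule.span ℂ S).topologicalClosure = ⊤)
    (e : X ≃ₜ Y) :
    (Submodule.span ℂ ((fun F : C(Y, ℂ) => F.comp (e : C(X, Y))) '' S)).topologicalClosure = ⊤ := by
  let precomp : C(Y, ℂ) →L[ℂ] C(X, ℂ) :=
    ⟨(ContinuousMap.compRightAlgHom ℂ ℂ (e : C(X, Y))).toLinearMap,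
      ContinuousMap.compRightAlgHom_continuous ℂ ℂ _⟩
  have precomp_surj : Function.Surjective precomp := fun F =>
    ⟨F.comp (e.symm : C(Y, X)), ContinuousMap.ext fun x => congrArg F (e.symm_apply_apply x)⟩
  have := precomp_surj.denseRange.topologicalClosure_map_submodule hS
  rwa [Submodule.map_span] at this

end DenseSpan

/-! ### Uniform rigidity -/

/-- Iterates of `T` return uniformly close to the identity at arbitrarily large times. -/
def UniformlyRigid {X : Type*} [Dist X] (T : X → X) : Prop :=
  ∀ ε > 0, ∃ᶠ n in atTop, ∀ x, dist (T^[n] x) x < ε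

section UniformlyRigid

variable {X : Type*} [MetricSpace X] {T : X → X}

lemma UniformlyRigid.exists_iterate_succ (hT : UniformlyRigid T) {ε : ℝ} (hε : 0 < ε) :
    ∃ n, ∀ x, dist (T^[n + 1] x) x < ε := by
  obtain ⟨n, hn, hlt⟩ := frequently_atTop.1 (hT ε hε) 1
  exact ⟨n - 1, by rwa [Nat.sub_add_cancel hn]⟩

lemma UniformlyRigid.injective (hT : UniformlyRigid T) : Function.Injective T := by
  refine fun x y hxy => eq_of_forall_dist_le fun ε hε => ?_
  obtain ⟨n, hn⟩ := hT.exists_iterate_succ (half_pos hε)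
  have iterate_eq : T^[n + 1] x = T^[n + 1] y := by simp only [Function.iterate_succ_apply, hxy]
  linarith [dist_triangle_left x y (T^[n + 1] x), hn x, iterate_eq ▸ hn y]

lemma UniformlyRigid.surjective [CompactSpace X] (hT : UniformlyRigid T) (hc : Continuous T) :
    Function.Surjective T := by
  refine fun y => (isCompact_range hc).isClosed.closure_subset ?_
  refine Metric.mem_closure_iff.2 fun ε hε => ?_
  obtain ⟨n, hn⟩ := hT.exists_iterate_succ hε
  exact ⟨T^[n + 1] y, ⟨T^[n] y, (Function.iterate_succ_apply' T n y).symm⟩, dist_comm y _ ▸ hn y⟩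

lemma UniformlyRigid.isHomeomorph [CompactSpace X] (hT : UniformlyRigid T) (hc : Continuous T) :
    IsHomeomorph T :=
  isHomeomorph_iff_continuous_bijective.2 ⟨hc, hT.injective, hT.surjective hc⟩

lemma UniformlyRigid.exists_not_tendsto [Nontrivial X] [MeasurableSpace X] [BorelSpace X]
    (hT : UniformlyRigid T) (μ : Measure X) [μ.IsOpenPosMeasure] :
    ∃ A B : Set X, MeasurableSet A ∧ MeasurableSet B ∧
      ¬Tendsto (fun n => μ (T^[n] ⁻¹' A ∩ B)) atTop (nhds (μ A * μ B)) := by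
  obtain ⟨a, b, hab⟩ := exists_pair_ne X
  have r_pos : 0 < dist a b / 3 := div_pos (dist_pos.2 hab) three_pos
  refine ⟨Metric.ball a (dist a b / 3), Metric.ball b (dist a b / 3), measurableSet_ball,
    measurableSet_ball, fun h => ?_⟩
  have prod_pos := ENNReal.mul_pos (Metric.measure_ball_pos μ a r_pos).ne'
    (Metric.measure_ball_pos μ b r_pos).ne'
  refine hT _ r_pos ((h.eventually_const_lt prod_pos).mono fun n hn hclose => hn.ne' ?_)
  convert measure_empty (μ := μ)
  refine eq_empty_of_forall_notMem fun x ⟨hxa, hxb⟩ => ?_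
  rw [mem_preimage, Metric.mem_ball] at hxa
  rw [Metric.mem_ball] at hxb
  linarith [dist_triangle4 a (T^[n] x) x b, hclose x, dist_comm a (T^[n] x)]

end UniformlyRigid

/-! ### The category argument -/

lemma exists_mem_closure_forall_mem {Y : Type*} [PseudoEMetricSpace Y] [CompleteSpace Y]
    {P : Set Y} (hP : P.Nonempty) {O : ℕ → Set Y} (hO : ∀ n, IsOpen (O n))
    (hd : ∀ n, P ⊆ closure (P ∩ O n)) : ∃ y ∈ closure P, ∀ n, y ∈ O n := by
  have : CompleteSpace (closure P) := isClosed_closure.completeSpace_coe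
  have : Nonempty (closure P) := hP.closure.to_subtype
  obtain ⟨y, hy⟩ := (dense_iInter_of_isOpen (f := fun n => ((↑) ⁻¹' O n : Set (closure P)))
    (fun n => (hO n).preimage continuous_subtype_val) fun n => by
      refine Subtype.dense_iff.2 (closure_minimal ?_ isClosed_closure)
      refine (hd n).trans (closure_mono fun y hy => ?_)
      exact ⟨⟨y, subset_closure hy.1⟩, hy.2, rfl⟩).nonempty
  exact ⟨y, y.2, fun n => mem_iInter.1 hy n⟩

section Iterate

variable {X : Type*} [TopologicalSpace X]

/-- The `n`-th iterate of `T` as a continuous map. -/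
def iterateMap (n : ℕ) (T : C(X, X)) : C(X, X) :=
  ⟨T^[n], T.continuous.iterate n⟩

@[simp]
lemma coe_iterateMap (n : ℕ) (T : C(X, X)) : ⇑(iterateMap n T) = T^[n] :=
  rfl

lemma continuous_iterateMap [LocallyCompactSpace X] (n : ℕ) :
    Continuous (iterateMap n : C(X, X) → C(X, X)) := by
  induction n with
  | zero => exact continuous_const (y := ContinuousMap.id X)
  | succ n ih => exact ih.compCM continuous_id

end Iterate

section Continuity

variable {X : Type*} [MetricSpace X] [CompactSpace X] [MeasurableSpace X] [BorelSpace X]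

lemma continuous_integral_comp_mul {𝕜 : Type*} [RCLike 𝕜] (μ : Measure X) [IsFiniteMeasure μ]
    (F G : C(X, 𝕜)) : Continuous fun T : C(X, X) => ∫ x, F (T x) * G x ∂μ :=
  continuous_of_dominated (bound := fun _ => ‖F‖ * ‖G‖)
    (fun T => (by fun_prop : Continuous fun x => F (T x) * G x).aestronglyMeasurable)
    (fun T => ae_of_all μ fun x => by
      rw [norm_mul]
      gcongr
      exacts [F.norm_coe_le_norm _, G.norm_coe_le_norm _])
    (integrable_const _)
    (ae_of_all μ fun x => by fun_prop)

lemma continuous_integral_comp {𝕜 : Type*} [RCLike 𝕜] (μ : Measure X) [IsFiniteMeasure μ]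
    (F : C(X, 𝕜)) : Continuous fun T : C(X, X) => ∫ x, F (T x) ∂μ := by
  simpa using continuous_integral_comp_mul μ F 1

lemma continuous_correlation_comp (μ : Measure X) [IsFiniteMeasure μ] (F G : C(X, ℂ)) :
    Continuous fun T : C(X, X) => correlation μ (F ∘ T) G :=
  (continuous_integral_comp_mul μ F G).sub ((continuous_integral_comp μ F).mul continuous_const)

omit [CompactSpace X] in
lemma measurePreserving_iff_forall_integral_comp {μ : Measure X} [IsFiniteMeasure μ]
    {T : C(X, X)} :
    MeasurePreserving T μ μ ↔ ∀ F : C(X, ℝ), ∫ x, F (T x) ∂μ = ∫ x, F x ∂μ := by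
  have T_meas : Measurable T := T.continuous.measurable
  have integral_map_eq (F : C(X, ℝ)) : ∫ x, F x ∂μ.map T = ∫ x, F (T x) ∂μ :=
    integral_map T_meas.aemeasurable F.continuous.aestronglyMeasurable
  refine ⟨fun hT F => by rw [← integral_map_eq, hT.map_eq], fun h => ⟨T_meas, ?_⟩⟩
  exact ext_of_forall_integral_eq_of_IsFiniteMeasure fun f =>
    (integral_map_eq f.toContinuousMap).trans (h f.toContinuousMap)

lemma isClosed_setOf_measurePreserving (μ : Measure X) [IsFiniteMeasure μ] :
    IsClosed {T : C(X, X) | MeasurePreserving T μ μ} := by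
  simp only [measurePreserving_iff_forall_integral_comp, ofPred_forall]
  exact isClosed_iInter fun F => isClosed_eq (continuous_integral_comp μ F) continuous_const

end Continuity

section NearlyRigid

variable {X : Type*} [MetricSpace X] [CompactSpace X]

/-- Maps having an iterate of order at least `N` that is uniformly `ε`-close to the identity. -/
def nearlyRigid (X : Type*) [MetricSpace X] [CompactSpace X] (N : ℕ) (ε : ℝ) : Set C(X, X) :=
  {T | ∃ n ≥ N, dist (iterateMap n T) (.id X) < ε}

lemma isOpen_nearlyRigid (N : ℕ) (ε : ℝ) : IsOpen (nearlyRigid X N ε) := by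
  simp only [nearlyRigid, ofPred_exists]
  exact isOpen_iUnion fun n => isOpen_const.and <|
    isOpen_lt ((continuous_iterateMap n).dist continuous_const) continuous_const

lemma mem_nearlyRigid_of_iterate_eq_id {T : C(X, X)} {q : ℕ} (hq : 0 < q) (hT : T^[q] = id)
    (N : ℕ) {ε : ℝ} (hε : 0 < ε) : T ∈ nearlyRigid X N ε := by
  refine ⟨q * N, Nat.le_mul_of_pos_left N hq, ?_⟩
  have : iterateMap (q * N) T = .id X :=
    ContinuousMap.ext fun x => by simp [Function.iterate_mul, hT]
  rwa [this, dist_self]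

lemma uniformlyRigid_of_forall_mem_nearlyRigid {T : C(X, X)}
    (h : ∀ N : ℕ, T ∈ nearlyRigid X N (1 / (N + 1))) : UniformlyRigid T := by
  refine fun ε hε => frequently_atTop.2 fun M => ?_
  obtain ⟨K, hK⟩ := exists_nat_one_div_lt hε
  obtain ⟨n, hn, hlt⟩ := h (max K M)
  refine ⟨n, (le_max_right K M).trans hn, fun x => ?_⟩
  calc dist (T^[n] x) x ≤ dist (iterateMap n T) (.id X) :=
        ContinuousMap.dist_apply_le_dist (f := iterateMap n T) (g := .id X) x
    _ < 1 / ((max K M : ℕ) + 1) := hlt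
    _ ≤ 1 / (K + 1) := by gcongr; exact le_max_left K M
    _ < ε := hK

end NearlyRigid

section NearlyMixing

variable {X : Type*} [MetricSpace X] [CompactSpace X] [MeasurableSpace X] [BorelSpace X]

/-- Maps having an iterate that decorrelates the observables in `s` up to `ε`. -/
def nearlyMixing (μ : Measure X) (s : Set C(X, ℂ)) (ε : ℝ) : Set C(X, X) :=
  {T | ∃ n, ∀ F ∈ s, ∀ G ∈ s, ‖correlation μ (F ∘ T^[n]) G‖ < ε}

lemma isOpen_nearlyMixing (μ : Measure X) [IsFiniteMeasure μ] {s : Set C(X, ℂ)} (hs : s.Finite)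
    (ε : ℝ) : IsOpen (nearlyMixing μ s ε) := by
  simp only [nearlyMixing, ofPred_exists, ofPred_forall]
  refine isOpen_iUnion fun n => hs.isOpen_biInter fun F _ => hs.isOpen_biInter fun G _ => ?_
  exact isOpen_lt ((continuous_correlation_comp μ F G).comp (continuous_iterateMap n)).norm
    continuous_const

variable {μ : Measure X} [IsProbabilityMeasure μ]

lemma exists_mixingAlong_of_forall_mem_nearlyMixing {T : C(X, X)} (hT : MeasurePreserving T μ μ)
    {F : ℕ → C(X, ℂ)} (hF : DenseRange F)
    (h : ∀ N : ℕ, T ∈ nearlyMixing μ (F '' Iio N) (1 / (N + 1))) :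
    ∃ l : Filter ℕ, l.NeBot ∧ MixingAlong μ l fun n => T^[n] := by
  choose n hn using h
  have dense_span : (Submodule.span ℂ (range F)).topologicalClosure = ⊤ :=
    Submodule.dense_iff_topologicalClosure_eq_top.1 (hF.mono Submodule.subset_span)
  refine ⟨map n atTop, inferInstance, mixingAlong_of_dense_span dense_span hT.iterate ?_⟩
  rintro - ⟨i, rfl⟩ - ⟨j, rfl⟩
  refine tendsto_map'_iff.2 (squeeze_zero_norm' ?_ tendsto_one_div_add_atTop_nhds_zero_nat)
  filter_upwards [eventually_gt_atTop i, eventually_gt_atTop j] with N hi hj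
  exact (hn N _ (mem_image_of_mem F hi) _ (mem_image_of_mem F hj)).le

theorem exists_uniformlyRigid_mixingAlong {P : Set C(X, X)} (hP : P.Nonempty)
    (hmp : ∀ T ∈ P, MeasurePreserving T μ μ) (hper : ∀ T ∈ P, ∃ q > 0, T^[q] = id)
    (hmix : ∀ s : Set C(X, ℂ), s.Finite → ∀ ε > 0, P ⊆ closure (P ∩ nearlyMixing μ s ε)) :
    ∃ T : C(X, X), MeasurePreserving T μ μ ∧ UniformlyRigid T ∧
      ∃ l : Filter ℕ, l.NeBot ∧ MixingAlong μ l fun n => T^[n] := by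
  let F := TopologicalSpace.denseSeq C(X, ℂ)
  let O (N : ℕ) := nearlyRigid X N (1 / (N + 1)) ∩ nearlyMixing μ (F '' Iio N) (1 / (N + 1))
  have F_finite (N : ℕ) : (F '' Iio N).Finite := (finite_Iio N).image F
  have P_subset (N : ℕ) : P ⊆ nearlyRigid X N (1 / (N + 1)) := fun T hT => by
    obtain ⟨q, hq, hTq⟩ := hper T hT
    exact mem_nearlyRigid_of_iterate_eq_id hq hTq N (by positivity)
  have isOpen_O (N : ℕ) : IsOpen (O N) :=
    (isOpen_nearlyRigid N _).inter (isOpen_nearlyMixing μ (F_finite N) _)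
  obtain ⟨T, hT, hTO⟩ := exists_mem_closure_forall_mem hP isOpen_O fun N => by
    simpa only [O, ← inter_assoc, inter_eq_self_of_subset_left (P_subset N)] using
      hmix _ (F_finite N) _ (by positivity)
  have T_mp : MeasurePreserving T μ μ :=
    closure_minimal hmp (isClosed_setOf_measurePreserving μ) hT
  exact ⟨T, T_mp, uniformlyRigid_of_forall_mem_nearlyRigid fun N => (hTO N).1,
    exists_mixingAlong_of_forall_mem_nearlyMixing T_mp
      (TopologicalSpace.denseRange_denseSeq _) fun N => (hTO N).2⟩

end NearlyMixing

/-! ### Conjugates of translations -/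

section ConjTranslation

variable {G : Type*} [TopologicalSpace G] [AddGroup G] [ContinuousAdd G]

/-- The translation by `a`, conjugated by the homeomorphism `H`. -/
def conjTranslation (H : G ≃ₜ G) (a : G) : C(G, G) :=
  ⟨fun x => H (a + H.symm x), by fun_prop⟩

@[simp]
lemma conjTranslation_apply (H : G ≃ₜ G) (a x : G) :
    conjTranslation H a x = H (a + H.symm x) :=
  rfl

lemma conjTranslation_iterate (H : G ≃ₜ G) (a : G) (n : ℕ) :
    (conjTranslation H a)^[n] = conjTranslation H (n • a) := by
  induction n with
  | zero => ext x; simp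
  | succ n ih => ext x; simp [Function.iterate_succ_apply, ih, succ_nsmul, add_assoc]

lemma continuous_conjTranslation (H : G ≃ₜ G) : Continuous (conjTranslation H) :=
  ContinuousMap.continuous_of_continuous_uncurry _ <| by
    simp only [Function.uncurry_def, conjTranslation_apply]
    fun_prop

lemma conjTranslation_trans_of_commute {g : G ≃ₜ G} {a : G} (hg : ∀ x, g (a + x) = a + g x)
    (H : G ≃ₜ G) : conjTranslation (g.trans H) a = conjTranslation H a := by
  ext x
  simp [hg]

variable [MeasurableSpace G] [BorelSpace G] {μ : Measure G} {H : G ≃ₜ G}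

lemma measurePreserving_conjTranslation [μ.IsAddLeftInvariant] (hH : MeasurePreserving H μ μ)
    (a : G) : MeasurePreserving (conjTranslation H a) μ μ :=
  hH.comp ((measurePreserving_add_left μ a).comp (hH.symm H.toMeasurableEquiv))

lemma MixingAlong.conjTranslation_trans {ι : Type*} {l : Filter ι} {g : ι → G ≃ₜ G} {a : G}
    (hg : MixingAlong μ l fun i => conjTranslation (g i) a) (hH : MeasurePreserving H μ μ) :
    MixingAlong μ l fun i => conjTranslation ((g i).trans H) a :=
  hg.conj (H := H.toMeasurableEquiv) hH

end ConjTranslation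

section FiberShear

variable {X G : Type*} [TopologicalSpace X] [TopologicalSpace G] [AddGroup G]
  [IsTopologicalAddGroup G]

/-- The skew translation `(x, y) ↦ (x, y + φ x)`. -/
def fiberShear (φ : C(X, G)) : X × G ≃ₜ X × G where
  toFun z := (z.1, z.2 + φ z.1)
  invFun z := (z.1, z.2 - φ z.1)
  left_inv z := by simp
  right_inv z := by simp

lemma measurePreserving_fiberShear [MeasurableSpace X] [MeasurableSpace G] [BorelSpace X]
    [BorelSpace G] [BorelSpace (X × G)] (φ : C(X, G)) (μ : Measure X) [SFinite μ] (ν : Measure G)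
    [SFinite ν] [ν.IsAddRightInvariant] :
    MeasurePreserving (fiberShear φ) (μ.prod ν) (μ.prod ν) :=
  (MeasurePreserving.id μ).skew_product (g := fun x y => y + φ x)
    (continuous_snd.comp (fiberShear φ).continuous).measurable
    (ae_of_all μ fun x => (measurePreserving_add_right ν (φ x)).map_eq)

end FiberShear

/-! ### The circle -/

instance isProbabilityMeasure_unitAddCircle :
    IsProbabilityMeasure (volume : Measure UnitAddCircle) :=
  ⟨by simp⟩

section Circle

lemma norm_coe_of_abs_le_half {y : ℝ} (hy : |y| ≤ 1 / 2) : ‖(y : UnitAddCircle)‖ = |y| :=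
  (AddCircle.norm_coe_eq_abs_iff 1 one_ne_zero).2 (by simpa using hy)

lemma exists_coe_eq_of_mem_Ico (u : UnitAddCircle) :
    ∃ y ∈ Ico (-(1 / 2) : ℝ) (1 / 2), (y : UnitAddCircle) = u := by
  obtain ⟨y, hy⟩ := (AddCircle.equivIco (1 : ℝ) (-(1 / 2))).symm.surjective u
  exact ⟨y, ⟨y.2.1, y.2.2.trans_eq (by norm_num)⟩, hy⟩

lemma norm_add_coe_half (u : UnitAddCircle) :
    ‖u + ((1 / 2 : ℝ) : UnitAddCircle)‖ = 1 / 2 - ‖u‖ := by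
  obtain ⟨y, ⟨hy, hy'⟩, rfl⟩ := exists_coe_eq_of_mem_Ico u
  rw [norm_coe_of_abs_le_half (abs_le.2 ⟨hy, hy'.le⟩)]
  rcases le_total 0 y with h | h
  · have coe_eq : (y : UnitAddCircle) + ((1 / 2 : ℝ) : UnitAddCircle) =
        ((y - 1 / 2 : ℝ) : UnitAddCircle) := by
      rw [← AddCircle.coe_add, show y + 1 / 2 = y - 1 / 2 + 1 by ring, AddCircle.coe_add_period]
    rw [coe_eq, norm_coe_of_abs_le_half (abs_le.2 ⟨by linarith, by linarith⟩), abs_of_nonneg h,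
      abs_of_nonpos (by linarith), neg_sub]
  · rw [← AddCircle.coe_add, norm_coe_of_abs_le_half (abs_le.2 ⟨by linarith, by linarith⟩),
      abs_of_nonpos h, abs_of_nonneg (by linarith)]
    ring

instance nontrivial_unitAddCircle : Nontrivial UnitAddCircle :=
  ⟨((1 / 2 : ℝ) : UnitAddCircle), 0, fun h => by
    have := norm_add_coe_half 0
    rw [h] at this
    norm_num at this⟩

lemma integral_comp_coe_two_mul_norm (F : C(UnitAddCircle, ℝ)) :
    ∫ u : UnitAddCircle, F ((2 * ‖u‖ : ℝ) : UnitAddCircle) = ∫ u, F u := by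
  have norm_cont : Continuous fun y : ℝ => F ((2 * ‖(y : UnitAddCircle)‖ : ℝ) : UnitAddCircle) :=
    F.continuous.comp ((AddCircle.continuous_mk' 1).comp
      (continuous_const.mul (AddCircle.continuous_mk' 1).norm))
  have right_half : ∫ y in (0 : ℝ)..1 / 2, F ((2 * ‖(y : UnitAddCircle)‖ : ℝ) : UnitAddCircle) =
      ∫ y in (0 : ℝ)..1 / 2, F ((2 * y : ℝ) : UnitAddCircle) :=
    intervalIntegral.integral_congr fun y hy => by
      rw [uIcc_of_le (by norm_num)] at hy
      rw [norm_coe_of_abs_le_half (abs_le.2 ⟨by linarith [hy.1], hy.2⟩), abs_of_nonneg hy.1]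
  have left_half : ∫ y in (-(1 / 2) : ℝ)..0,
        F ((2 * ‖(y : UnitAddCircle)‖ : ℝ) : UnitAddCircle) =
      ∫ y in (0 : ℝ)..1 / 2, F ((2 * ‖(y : UnitAddCircle)‖ : ℝ) : UnitAddCircle) := by
    simpa using (intervalIntegral.integral_comp_neg (a := 0) (b := 1 / 2)
      fun y : ℝ => F ((2 * ‖(y : UnitAddCircle)‖ : ℝ) : UnitAddCircle)).symm
  have rescale : 2 * ∫ y in (0 : ℝ)..1 / 2, F ((2 * y : ℝ) : UnitAddCircle) =
      ∫ y in (0 : ℝ)..1, F (y : UnitAddCircle) := by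
    simpa using intervalIntegral.mul_integral_comp_mul_left (a := 0) (b := 1 / 2)
      (f := fun y : ℝ => F (y : UnitAddCircle)) 2
  rw [← UnitAddCircle.intervalIntegral_preimage (-(1 / 2)), ←
    UnitAddCircle.intervalIntegral_preimage 0, zero_add, ← rescale,
    show (-(1 / 2) + 1 : ℝ) = 1 / 2 by norm_num, ←
    intervalIntegral.integral_add_adjacent_intervals (norm_cont.intervalIntegrable _ 0)
      (norm_cont.intervalIntegrable 0 _), left_half, right_half, two_mul]

lemma measurePreserving_coe_two_mul_norm :
    MeasurePreserving fun u : UnitAddCircle => ((2 * ‖u‖ : ℝ) : UnitAddCircle) :=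
  measurePreserving_iff_forall_integral_comp
    (T := ⟨_, (AddCircle.continuous_mk' 1).comp (continuous_const.mul continuous_norm)⟩) |>.2
    integral_comp_coe_two_mul_norm

lemma fourier_apply_add (k : ℤ) (x y : UnitAddCircle) :
    fourier k (x + y) = fourier k x * fourier k y := by
  simp only [fourier_apply, smul_add, AddCircle.toCircle_add, Circle.coe_mul]

lemma fourier_apply_neg (k : ℤ) (x : UnitAddCircle) : fourier k (-x) = fourier (-k) x := by
  simp only [fourier_apply, smul_neg, neg_smul]

lemma fourier_apply_nsmul (k : ℤ) (n : ℕ) (x : UnitAddCircle) :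
    fourier k (n • x) = fourier (k * n) x := by
  simp only [fourier_apply, mul_smul, natCast_zsmul]

lemma integral_fourier_of_ne_zero {k : ℤ} (hk : k ≠ 0) : ∫ x : UnitAddCircle, fourier k x = 0 :=
  integral_eq_zero_of_add_right_eq_neg (fourier_add_half_inv_index hk one_pos)

lemma integral_fourier_comp_of_ne_zero {X : Type*} [MeasurableSpace X] {μ : Measure X}
    {T : X → UnitAddCircle} (hT : MeasurePreserving T μ volume) {k : ℤ} (hk : k ≠ 0) :
    ∫ x, fourier k (T x) ∂μ = 0 := by
  rw [← integral_fourier_of_ne_zero hk, ← hT.map_eq, integral_map hT.aemeasurable]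
  exact (fourier k).continuous.aestronglyMeasurable

/-- The triangle wave of period `1 / q` and slopes `±q`, read modulo `1`. -/
def tent (q : ℕ) : C(UnitAddCircle, UnitAddCircle) :=
  ⟨fun x => (‖q • x‖ : ℝ), (AddCircle.continuous_mk' 1).comp (by fun_prop)⟩

@[simp]
lemma tent_apply (q : ℕ) (x : UnitAddCircle) : tent q x = (‖q • x‖ : ℝ) :=
  rfl

lemma tent_add_of_nsmul_eq_zero {q : ℕ} {a : UnitAddCircle} (ha : q • a = 0)
    (x : UnitAddCircle) : tent q (a + x) = tent q x := by
  simp [smul_add, ha]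

variable {q : ℕ} {t : UnitAddCircle}

lemma tent_add_sub_tent (ht : q • t = ((1 / 2 : ℝ) : UnitAddCircle)) (x : UnitAddCircle) :
    tent q (t + x) - tent q x =
      ((1 / 2 : ℝ) : UnitAddCircle) - ((2 * ‖q • x‖ : ℝ) : UnitAddCircle) := by
  rw [tent_apply, tent_apply, smul_add, ht, add_comm, norm_add_coe_half, ← AddCircle.coe_sub,
    ← AddCircle.coe_sub, sub_sub, two_mul]

lemma measurePreserving_tent_add_sub_tent (hq : q ≠ 0)
    (ht : q • t = ((1 / 2 : ℝ) : UnitAddCircle)) :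
    MeasurePreserving fun x => tent q (t + x) - tent q x := by
  have nsmul_mp : MeasurePreserving fun x : UnitAddCircle => q • x := by
    simpa using Measure.measurePreserving_zsmul (volume : Measure UnitAddCircle)
      (Nat.cast_ne_zero.2 hq)
  simp only [tent_add_sub_tent ht]
  exact (Measure.measurePreserving_sub_left volume _).comp
    (measurePreserving_coe_two_mul_norm.comp nsmul_mp)

end Circle

/-! ### Mixing conjugates of torus translations -/

instance isAddLeftInvariant_volume_T2 : (volume : Measure T2).IsAddLeftInvariant :=
  inferInstanceAs (Measure.prod volume volume).IsAddLeftInvariant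

section Torus

/-- The character `(x, y) ↦ exp (2πi (n.1 x + n.2 y))` of the torus. -/
def torusChar (n : ℤ × ℤ) : C(T2, ℂ) :=
  ⟨fun z => fourier n.1 z.1 * fourier n.2 z.2, by fun_prop⟩

@[simp]
lemma torusChar_apply (n : ℤ × ℤ) (z : T2) :
    torusChar n z = fourier n.1 z.1 * fourier n.2 z.2 :=
  rfl

lemma torusChar_zero : torusChar 0 = 1 := by
  ext z
  simp

lemma span_torusChar_closure_eq_top :
    (Submodule.span ℂ (range torusChar)).topologicalClosure = ⊤ := by
  have h := span_precomp_homeomorph_closure_eq_top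
    (UnitAddTorus.span_mFourier_closure_eq_top (d := Fin 2)) Homeomorph.finTwoArrow.symm
  have torusChar_eq (n : ℤ × ℤ) : torusChar n = (UnitAddTorus.mFourier ![n.1, n.2]).comp
      (Homeomorph.finTwoArrow.symm : T2 ≃ₜ UnitAddTorus (Fin 2)) :=
    ContinuousMap.ext fun z =>
      (Fin.prod_univ_two fun i => fourier (![n.1, n.2] i) (![z.1, z.2] i)).symm
  rw [← range_comp, ← (finTwoArrowEquiv ℤ).symm.surjective.range_comp] at h
  rwa [funext torusChar_eq]

/-- The shear `(x, y) ↦ (x, y + tent q x)` followed by `(x, y) ↦ (x + M y, y)`. The first one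
decorrelates functions of `y`, and the second one turns the other characters into such functions. -/
def mixingShear (q M : ℕ) : T2 ≃ₜ T2 :=
  (fiberShear (tent q)).trans <| (Homeomorph.prodComm _ _).trans <|
    (fiberShear ⟨fun y : UnitAddCircle => M • y, by fun_prop⟩).trans (Homeomorph.prodComm _ _)

@[simp]
lemma mixingShear_apply (q M : ℕ) (z : T2) :
    mixingShear q M z = (z.1 + M • (z.2 + tent q z.1), z.2 + tent q z.1) :=
  rfl

lemma measurePreserving_mixingShear (q M : ℕ) : MeasurePreserving (mixingShear q M) :=
  Measure.measurePreserving_swap.comp <| (measurePreserving_fiberShear _ _ _).comp <|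
    Measure.measurePreserving_swap.comp <| measurePreserving_fiberShear _ _ _

lemma mixingShear_add_of_nsmul_eq_zero {q : ℕ} {α : UnitAddCircle} (hα : q • α = 0) (M : ℕ)
    (z : T2) : mixingShear q M ((α, 0) + z) = (α, 0) + mixingShear q M z := by
  simp only [mixingShear_apply, Prod.fst_add, Prod.snd_add, zero_add,
    tent_add_of_nsmul_eq_zero hα, Prod.mk_add_mk, add_assoc]

lemma torusChar_mixingShear (n : ℤ × ℤ) (q M : ℕ) (z : T2) :
    torusChar n (mixingShear q M z) =
      fourier n.1 z.1 * fourier (n.1 * M + n.2) (tent q z.1) * fourier (n.1 * M + n.2) z.2 := by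
  simp only [torusChar_apply, mixingShear_apply, fourier_apply_add, fourier_apply_nsmul,
    fourier_add]
  ring

lemma eq_zero_of_mul_add_eq_zero {a b M : ℤ} (hb : |b| < M) (h : a * M + b = 0) :
    a = 0 ∧ b = 0 := by
  obtain rfl : b = 0 := Int.eq_zero_of_abs_lt_dvd ⟨-a, by linarith⟩ hb
  exact ⟨by simpa [((abs_nonneg 0).trans_lt hb).ne'] using h, rfl⟩

variable {q M : ℕ} {t : UnitAddCircle} {m n : ℤ × ℤ}

lemma integral_fourier_tent_add_mul (hq : q ≠ 0) (ht : q • t = ((1 / 2 : ℝ) : UnitAddCircle))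
    {k : ℤ} (hk : k ≠ 0) :
    ∫ x, fourier k (tent q (t + x)) * fourier (-k) (tent q x) = 0 := by
  rw [← integral_fourier_comp_of_ne_zero (measurePreserving_tent_add_sub_tent hq ht) hk]
  simp only [sub_eq_add_neg, fourier_apply_add, fourier_apply_neg]

/-- Integrating over the second coordinate leaves only the case `n = -m`, in which the increments
of the tent wave make the integral over the first coordinate vanish. -/
lemma integral_torusChar_mixingShear_mul (hq : q ≠ 0)
    (ht : q • t = ((1 / 2 : ℝ) : UnitAddCircle)) (hM : |m.2| + |n.2| < M) (hm : m ≠ 0) :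
    ∫ z : T2, torusChar m (mixingShear q M ((t, 0) + z)) * torusChar n (mixingShear q M z) = 0 := by
  set k := m.1 * M + m.2 with hk
  set l := n.1 * M + n.2 with hl
  have separate (z : T2) :
      torusChar m (mixingShear q M ((t, 0) + z)) * torusChar n (mixingShear q M z) =
        (fourier m.1 t * fourier (m.1 + n.1) z.1 *
          (fourier k (tent q (t + z.1)) * fourier l (tent q z.1))) * fourier (k + l) z.2 := by
    simp only [torusChar_mixingShear, Prod.fst_add, Prod.snd_add, zero_add, fourier_apply_add,
      fourier_add, ← hk, ← hl]
    ring
  simp only [separate]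
  rw [Measure.volume_eq_prod, integral_prod_mul (fun x => fourier m.1 t * fourier (m.1 + n.1) x *
    (fourier k (tent q (t + x)) * fourier l (tent q x))) (fun y => fourier (k + l) y)]
  by_cases hkl : k + l = 0
  · obtain ⟨fst_eq, -⟩ : m.1 + n.1 = 0 ∧ m.2 + n.2 = 0 :=
      eq_zero_of_mul_add_eq_zero ((abs_add_le _ _).trans_lt hM) (by linarith)
    have k_ne : k ≠ 0 := fun h => hm <| Prod.ext_iff.2 <|
      eq_zero_of_mul_add_eq_zero (by linarith [abs_nonneg n.2]) h
    simp only [fst_eq, eq_neg_of_add_eq_zero_right hkl, fourier_zero, mul_one, integral_const_mul,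
      integral_fourier_tent_add_mul hq ht k_ne, mul_zero, zero_mul]
  · rw [integral_fourier_of_ne_zero hkl, mul_zero]

lemma correlation_torusChar_conjTranslation_mixingShear (hq : q ≠ 0)
    (ht : q • t = ((1 / 2 : ℝ) : UnitAddCircle)) (hM : |m.2| + |n.2| < M) :
    correlation volume (torusChar m ∘ conjTranslation (mixingShear q M) (t, 0)) (torusChar n) =
      0 := by
  obtain rfl | hm := eq_or_ne m 0
  · simp [correlation, torusChar_zero]
  have mean_eq : ∫ z : T2, torusChar m (mixingShear q M ((t, 0) + z)) = 0 := by
    simpa [torusChar_zero] using integral_torusChar_mixingShear_mul (n := 0) hq ht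
      (by simpa using (le_add_of_nonneg_right (abs_nonneg n.2)).trans_lt hM) hm
  rw [← correlation_comp_measurableEquiv (H := (mixingShear q M).toMeasurableEquiv)
    (measurePreserving_mixingShear q M)]
  simp only [correlation, Function.comp_apply, conjTranslation_apply,
    Homeomorph.toMeasurableEquiv_coe, Homeomorph.symm_apply_apply, mean_eq,
    integral_torusChar_mixingShear_mul hq ht hM hm, zero_mul, sub_zero]

lemma mixingAlong_conjTranslation_mixingShear (hq : q ≠ 0)
    (ht : q • t = ((1 / 2 : ℝ) : UnitAddCircle)) :
    MixingAlong volume atTop fun M => conjTranslation (mixingShear q M) ((t, 0) : T2) := by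
  refine mixingAlong_of_dense_span span_torusChar_closure_eq_top
    (fun M => measurePreserving_conjTranslation (measurePreserving_mixingShear q M) _) ?_
  rintro - ⟨m, rfl⟩ - ⟨n, rfl⟩
  refine tendsto_const_nhds.congr' ?_
  filter_upwards [eventually_gt_atTop (|m.2| + |n.2|).toNat] with M hM
  exact (correlation_torusChar_conjTranslation_mixingShear hq ht (by omega)).symm

/-- The horizontal translations of finite order, conjugated by measure-preserving homeomorphisms:
the periodic maps whose closure is searched for a rigid and mixing one. -/
def torsionConjugates : Set C(T2, T2) :=
  {T | ∃ H : T2 ≃ₜ T2, MeasurePreserving H ∧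
    ∃ α : UnitAddCircle, IsOfFinAddOrder α ∧ conjTranslation H (α, 0) = T}

lemma torsionConjugates_nonempty : torsionConjugates.Nonempty :=
  ⟨_, .refl T2, .id _, 0, .zero, rfl⟩

lemma measurePreserving_of_mem_torsionConjugates {T : C(T2, T2)} (hT : T ∈ torsionConjugates) :
    MeasurePreserving T := by
  obtain ⟨H, hH, α, -, rfl⟩ := hT
  exact measurePreserving_conjTranslation hH _

lemma exists_iterate_eq_id_of_mem_torsionConjugates {T : C(T2, T2)}
    (hT : T ∈ torsionConjugates) : ∃ q > 0, T^[q] = id := by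
  obtain ⟨H, -, α, hα, rfl⟩ := hT
  obtain ⟨q, hq, hqα⟩ := isOfFinAddOrder_iff_nsmul_eq_zero.1 hα
  refine ⟨q, hq, ?_⟩
  ext1 z
  simp [conjTranslation_iterate, hqα, ← Prod.zero_eq_mk]

lemma exists_tendsto_isOfFinAddOrder_nsmul_eq (hq : q ≠ 0) {α : UnitAddCircle}
    (hα : q • α = 0) :
    ∃ t : UnitAddCircle, q • t = ((1 / 2 : ℝ) : UnitAddCircle) ∧ ∃ β : ℕ → UnitAddCircle,
      Tendsto β atTop (nhds α) ∧ ∀ j, IsOfFinAddOrder (β j) ∧ ∃ N : ℕ, N • β j = t := by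
  have hq' : (q : ℝ) ≠ 0 := Nat.cast_ne_zero.2 hq
  let δ (j : ℕ) : ℝ := 1 / (2 * q * q) * (1 / (j + 1))
  have nsmul_t : q • ((1 / (2 * q) : ℝ) : UnitAddCircle) = ((1 / 2 : ℝ) : UnitAddCircle) := by
    rw [← AddCircle.coe_nsmul, nsmul_eq_mul]
    congr 1
    field_simp
  have nsmul_β (j : ℕ) : (q * (j + 1)) • (α + (δ j : UnitAddCircle)) =
      ((1 / (2 * q) : ℝ) : UnitAddCircle) := by
    rw [smul_add, mul_nsmul, hα, smul_zero, zero_add, ← AddCircle.coe_nsmul, nsmul_eq_mul]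
    congr 1
    simp only [δ]
    push_cast
    field_simp
  have two_nsmul_half : 2 • ((1 / 2 : ℝ) : UnitAddCircle) = 0 := by
    rw [← AddCircle.coe_nsmul, nsmul_eq_mul]
    norm_num
  have δ_lim : Tendsto δ atTop (nhds 0) := by
    simpa only [mul_zero] using
      (tendsto_one_div_add_atTop_nhds_zero_nat (𝕜 := ℝ)).const_mul (1 / (2 * q * q) : ℝ)
  refine ⟨_, nsmul_t, fun j => α + (δ j : UnitAddCircle), ?_, fun j => ⟨?_, _, nsmul_β j⟩⟩
  · simpa using (((AddCircle.continuous_mk' 1).tendsto 0).comp δ_lim).const_add α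
  · refine isOfFinAddOrder_iff_nsmul_eq_zero.2 ⟨2 * (q * (q * (j + 1))), by positivity, ?_⟩
    rw [mul_smul, mul_smul, nsmul_β, nsmul_t, two_nsmul_half]

/-- If `q • α = 0`, conjugating by `mixingShear q M` first does not change the map; afterwards `α`
is perturbed so that some multiple of it becomes the angle `t` for which the conjugates mix. -/
lemma torsionConjugates_subset_closure_inter_nearlyMixing {s : Set C(T2, ℂ)} (hs : s.Finite)
    {ε : ℝ} (hε : 0 < ε) :
    torsionConjugates ⊆ closure (torsionConjugates ∩ nearlyMixing volume s ε) := by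
  rintro - ⟨H, hH, α, hα, rfl⟩
  obtain ⟨q, hq, hqα⟩ := isOfFinAddOrder_iff_nsmul_eq_zero.1 hα
  obtain ⟨t, ht, β, β_lim, hβ⟩ := exists_tendsto_isOfFinAddOrder_nsmul_eq hq.ne' hqα
  obtain ⟨M, hM⟩ := ((mixingAlong_conjTranslation_mixingShear hq.ne' ht).conjTranslation_trans
    hH).eventually_norm_correlation_lt hs hε |>.exists
  have conj_lim : Tendsto (fun j => conjTranslation ((mixingShear q M).trans H) (β j, 0)) atTop
      (nhds (conjTranslation H (α, 0))) := by
    rw [← conjTranslation_trans_of_commute (mixingShear_add_of_nsmul_eq_zero hqα M) H]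
    exact ((continuous_conjTranslation _).tendsto _).comp (β_lim.prodMk_nhds tendsto_const_nhds)
  refine mem_closure_of_tendsto conj_lim (.of_forall fun j => ?_)
  obtain ⟨β_fin, N, hN⟩ := hβ j
  refine ⟨⟨(mixingShear q M).trans H, hH.comp (measurePreserving_mixingShear q M), β j, β_fin,
    rfl⟩, N, ?_⟩
  rw [conjTranslation_iterate, Prod.smul_mk, hN, smul_zero]
  exact hM

theorem exists_uniformlyRigid_mixingAlong_torus :
    ∃ T : C(T2, T2), MeasurePreserving T ∧ UniformlyRigid T ∧
      ∃ l : Filter ℕ, l.NeBot ∧ MixingAlong volume l fun n => T^[n] :=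
  exists_uniformlyRigid_mixingAlong torsionConjugates_nonempty
    (fun _ => measurePreserving_of_mem_torsionConjugates)
    (fun _ => exists_iterate_eq_id_of_mem_torsionConjugates)
    fun _ hs _ => torsionConjugates_subset_closure_inter_nearlyMixing hs

end Torus

/-- There exists an automorphism of the torus which is weakly mixing but not strongly
mixing. -/
theorem exists_weakly_mixing_not_strongly_mixing_torus :
    ∃ U : T2 → T2, IsAutomorphism U ∧
      (∀ A B : Set T2, MeasurableSet A → MeasurableSet B →
        Tendsto
          (fun n : ℕ => (1 / n : ℝ) *
            ∑ j ∈ Finset.range n,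
              ((volume (U^[j] ⁻¹' A ∩ B)).toReal -
                (volume A).toReal * (volume B).toReal) ^ 2)
          atTop (nhds 0)) ∧
      (∃ A B : Set T2, MeasurableSet A ∧ MeasurableSet B ∧
        ¬ Tendsto (fun n : ℕ => volume (U^[n] ⁻¹' A ∩ B)) atTop
            (nhds (volume A * volume B))) := by
  obtain ⟨U, U_mp, U_rigid, l, hl, U_mixing⟩ := exists_uniformlyRigid_mixingAlong_torus
  let e := (U_rigid.isHomeomorph U.continuous).homeomorph
  refine ⟨U, ⟨U_mp.measurable, e.symm, e.symm.continuous.measurable,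
    ae_of_all _ e.symm_apply_apply, ae_of_all _ e.apply_symm_apply,
    fun A hA => U_mp.measure_preimage hA.nullMeasurableSet⟩,
    fun A B hA hB => U_mixing.tendsto_cesaro_sq U_mp hA hB, U_rigid.exists_not_tendsto volume⟩

end
end
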